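/- arXiv:1503.06778 — 3 statements merged into one kernel-verified Lean document; each statement's English description precedes it below -/
import Mathlib

section
/- Let 1 < p < ∞ and 1/p + 1/p' = 1. Suppose the two testing conditions hold: (i) for every J ∈ 𝓛, ∫_J (Σ_{I ∈ 𝓛, I ⊆ J} α_I · 1_I)^p dν ≤ C₁^p · μ(J), and (ii) for every J ∈ 𝓛, ∫_J (Σ_{I ∈ 𝓛, I ⊆ J} α_I · (ν(I)/μ(I)) · 1_I)^{p'} dμ ≤ C₂^{p'} · ν(J). Then the operator T_α f := Σ_{I ∈ 𝓛} α_I · E_I^μ f is bounded from L^p(μ) to L^p(ν), with operator norm at most an absolute constant (depending only on p) times C₁ + C₂. -/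
open MeasureTheory ENNReal NNReal Set Filter

/-- A lattice of measurable sets on a measurable space `X`: a union of countable
generations, each generation being a countable disjoint cover of `X`, and each set of
generation `n` being a (countable) disjoint union of sets of generation `n+1`. -/
structure LatticeFamily (X : Type*) [MeasurableSpace X] where
  gen : ℤ → Set (Set X)
  countable : ∀ n, (gen n).Countable
  meas : ∀ n, ∀ I ∈ gen n, MeasurableSet I
  pairwiseDisjoint : ∀ n, (gen n).PairwiseDisjoint id
  cover : ∀ n, ⋃₀ gen n = univ
  subdiv : ∀ n, ∀ I ∈ gen n, ∃ S ⊆ gen (n + 1), I = ⋃₀ S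

/-- The collection of all sets of the lattice. -/
def LatticeFamily.sets {X : Type*} [MeasurableSpace X] (L : LatticeFamily X) : Set (Set X) :=
  ⋃ n, L.gen n

/-- The averaging operator `E_I^μ f = (μ(I)⁻¹ ∫_I f dμ) · 1_I`. -/
noncomputable def avgOp {X : Type*} [MeasurableSpace X] (μ : Measure X) (I : Set X)
    (f : X → ℝ≥0∞) : X → ℝ≥0∞ :=
  I.indicator fun _ => (∫⁻ y in I, f y ∂μ) / μ I

/-- The lattice maximal function `M_μ f(x) = sup {E_I^μ f(x) : I ∈ 𝓛, x ∈ I}`. -/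
noncomputable def maxOp {X : Type*} [MeasurableSpace X] (L : LatticeFamily X) (μ : Measure X)
    (f : X → ℝ≥0∞) : X → ℝ≥0∞ := fun x =>
  ⨆ (I : Set X) (_ : I ∈ L.sets ∧ x ∈ I), (∫⁻ y in I, f y ∂μ) / μ I

namespace TW

noncomputable def cgeo (s : ℝ) : ℝ≥0∞ := 2 ^ s * (1 - 2 ^ (-s))⁻¹

lemma two_rpow_add (x y : ℝ) : (2 : ℝ≥0∞) ^ (x + y) = 2 ^ x * 2 ^ y :=
  ENNReal.rpow_add x y (by norm_num) (by norm_num)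

lemma cgeo_lt_top {s : ℝ} (hs : 0 < s) : cgeo s < ∞ := by
  unfold cgeo
  apply ENNReal.mul_lt_top
  · exact ENNReal.rpow_lt_top_of_nonneg hs.le (by norm_num)
  · rw [ENNReal.inv_lt_top]
    rw [tsub_pos_iff_lt]
    exact ENNReal.rpow_lt_one_of_one_lt_of_neg (by norm_num) (by linarith)

lemma geom {s : ℝ} (hs : 0 < s) (K : Finset ℤ) (t : ℝ≥0∞) :
    ∑ k ∈ K, (if (2 : ℝ≥0∞) ^ ((k : ℝ) - 1) < t then (2 : ℝ≥0∞) ^ ((k : ℝ) * s) else 0)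
      ≤ cgeo s * t ^ s := by
  classical
  rw [← Finset.sum_filter]
  set K' := K.filter (fun k : ℤ => (2 : ℝ≥0∞) ^ ((k : ℝ) - 1) < t) with hK'
  rcases K'.eq_empty_or_nonempty with h | h
  · simp [h]
  obtain ⟨m, hm, hmax⟩ := K'.exists_max_image id h
  have hmt : (2 : ℝ≥0∞) ^ ((m : ℝ) - 1) < t := (Finset.mem_filter.1 hm).2
  have h1 : ∀ k ∈ K', (2 : ℝ≥0∞) ^ ((k : ℝ) * s) =
      2 ^ ((m : ℝ) * s) * (2 ^ (-s)) ^ ((m - k).toNat) := by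
    intro k hk
    have hkm : k ≤ m := hmax k hk
    rw [← ENNReal.rpow_natCast, ← ENNReal.rpow_mul, ← two_rpow_add]
    congr 1
    have : (((m - k).toNat : ℕ) : ℝ) = (m : ℝ) - k := by
      have : (((m - k).toNat : ℤ)) = m - k := Int.toNat_of_nonneg (by omega)
      exact_mod_cast this
    rw [this]; ring
  rw [Finset.sum_congr rfl h1, ← Finset.mul_sum]
  have h2 : ∑ k ∈ K', ((2 : ℝ≥0∞) ^ (-s)) ^ ((m - k).toNat) ≤ (1 - 2 ^ (-s))⁻¹ := by
    rw [← ENNReal.tsum_geometric]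
    have hinj : Set.InjOn (fun k : ℤ => (m - k).toNat) K' := by
      intro a ha b hb hab
      have := hmax a ha
      have := hmax b hb
      simp only [id] at *
      omega
    rw [← Finset.sum_image (f := fun n : ℕ => ((2 : ℝ≥0∞) ^ (-s)) ^ n) hinj]
    exact ENNReal.sum_le_tsum _
  have h3 : (2 : ℝ≥0∞) ^ ((m : ℝ) * s) ≤ 2 ^ s * t ^ s := by
    have : (m : ℝ) * s = s + ((m : ℝ) - 1) * s := by ring
    rw [this, two_rpow_add, ENNReal.rpow_mul]
    gcongr
  calc _ ≤ (2 ^ s * t ^ s) * (1 - 2 ^ (-s))⁻¹ := by gcongr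
    _ = _ := by unfold cgeo; ring

variable {X : Type*} [MeasurableSpace X]

lemma strong {p : ℝ} (hp : 1 < p) (μ : Measure X) (f : X → ℝ≥0∞) (hf : Measurable f)
    (K : Finset ℤ) (V : ℤ → Set X) (hfin : ∀ k, μ (V k) < ∞)
    (hw : ∀ k : ℤ, (2 : ℝ≥0∞) ^ (k : ℝ) * μ (V k) ≤ ∫⁻ x in V k, f x ∂μ) :
    ∑ k ∈ K, (2 : ℝ≥0∞) ^ ((k : ℝ) * p) * μ (V k) ≤ 2 * cgeo (p - 1) * ∫⁻ x, f x ^ p ∂μ := by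
  have h1 : ∀ k : ℤ, (2 : ℝ≥0∞) ^ ((k : ℝ) - 1) * μ (V k) ≤
      ∫⁻ x, (if (2 : ℝ≥0∞) ^ ((k : ℝ) - 1) < f x then f x else 0) ∂μ := by
    intro k
    have e : (2 : ℝ≥0∞) ^ (k : ℝ) = 2 ^ ((k : ℝ) - 1) + 2 ^ ((k : ℝ) - 1) := by
      have : (k : ℝ) = ((k : ℝ) - 1) + 1 := by ring
      conv_lhs => rw [this, two_rpow_add, ENNReal.rpow_one, mul_two]
    have h := hw k
    rw [e, add_mul] at h
    have h2 : ∫⁻ x in V k, f x ∂μ ≤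
        ∫⁻ x, (if (2 : ℝ≥0∞) ^ ((k : ℝ) - 1) < f x then f x else 0) ∂μ
          + (2 : ℝ≥0∞) ^ ((k : ℝ) - 1) * μ (V k) := by
      calc ∫⁻ x in V k, f x ∂μ ≤ ∫⁻ x in V k,
            ((if (2 : ℝ≥0∞) ^ ((k : ℝ) - 1) < f x then f x else 0) + 2 ^ ((k : ℝ) - 1)) ∂μ := by
            apply lintegral_mono
            intro x
            dsimp only
            split_ifs with h
            · exact le_self_add
            · simpa using h
        _ = ∫⁻ x in V k, (if (2 : ℝ≥0∞) ^ ((k : ℝ) - 1) < f x then f x else 0) ∂μ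
          + (2 : ℝ≥0∞) ^ ((k : ℝ) - 1) * μ (V k) := by
            rw [lintegral_add_right _ measurable_const, setLIntegral_const]
        _ ≤ _ := by
            gcongr
            exact Measure.restrict_le_self
    refine (ENNReal.add_le_add_iff_right ?_).1 (h.trans h2)
    exact (ENNReal.mul_lt_top (by simp [lt_top_iff_ne_top, ENNReal.rpow_eq_top_iff]) (hfin k)).ne
  have hm : ∀ k : ℤ, Measurable (fun x => (if (2 : ℝ≥0∞) ^ ((k : ℝ) - 1) < f x then f x else 0)) :=
    fun k => Measurable.ite (measurableSet_lt measurable_const hf) hf measurable_const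
  calc ∑ k ∈ K, (2 : ℝ≥0∞) ^ ((k : ℝ) * p) * μ (V k)
      = ∑ k ∈ K, 2 * 2 ^ ((k : ℝ) * (p - 1)) * ((2 : ℝ≥0∞) ^ ((k : ℝ) - 1) * μ (V k)) := by
        refine Finset.sum_congr rfl fun k _ => ?_
        have : (k : ℝ) * p = 1 + (k : ℝ) * (p - 1) + ((k : ℝ) - 1) := by ring
        rw [this, two_rpow_add, two_rpow_add, ENNReal.rpow_one]; ring
    _ ≤ ∑ k ∈ K, 2 * 2 ^ ((k : ℝ) * (p - 1)) *
          ∫⁻ x, (if (2 : ℝ≥0∞) ^ ((k : ℝ) - 1) < f x then f x else 0) ∂μ := by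
        gcongr with k hk
        exact h1 k
    _ = ∫⁻ x, ∑ k ∈ K, 2 * 2 ^ ((k : ℝ) * (p - 1)) *
          (if (2 : ℝ≥0∞) ^ ((k : ℝ) - 1) < f x then f x else 0) ∂μ := by
        rw [lintegral_finsetSum]
        · refine Finset.sum_congr rfl fun k _ => ?_
          rw [lintegral_const_mul _ (hm k)]
        · intro k _
          exact (hm k).const_mul _
    _ ≤ ∫⁻ x, 2 * cgeo (p - 1) * f x ^ p ∂μ := by
        apply lintegral_mono
        intro x
        dsimp only
        have := geom (s := p - 1) (by linarith) K (f x)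
        calc _ = 2 * (f x * ∑ k ∈ K, (if (2 : ℝ≥0∞) ^ ((k : ℝ) - 1) < f x
                  then (2 : ℝ≥0∞) ^ ((k : ℝ) * (p - 1)) else 0)) := by
              rw [Finset.mul_sum, Finset.mul_sum]
              refine Finset.sum_congr rfl fun k _ => ?_
              split_ifs <;> ring
          _ ≤ 2 * (f x * (cgeo (p - 1) * f x ^ (p - 1))) := by gcongr
          _ = 2 * cgeo (p - 1) * (f x ^ (1 : ℝ) * f x ^ (p - 1)) := by
              rw [ENNReal.rpow_one]; ring
          _ = _ := by
              rw [← ENNReal.rpow_add_of_nonneg _ _ (by norm_num) (by linarith)]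
              congr 2; ring
    _ = _ := lintegral_const_mul _ (hf.pow_const p)

lemma level_step {p q : ℝ} (hpq : p.HolderConjugate q) (ν : Measure X) (S g : X → ℝ≥0∞)
    (hS : Measurable S) (hg : Measurable g) (V : Set X) (hV : MeasurableSet V)
    (hSV : ∀ x, x ∉ V → S x = 0) (D : Finset (Set X)) (hD : ∀ J ∈ D, MeasurableSet J)
    (hDd : (D : Set (Set X)).PairwiseDisjoint id) (hDV : ∀ J ∈ D, J ⊆ V)
    (hc : ∀ J ∈ D, ∫⁻ x in J, S x * g x ∂ν = ((∫⁻ x in J, g x ∂ν) / ν J) * ∫⁻ x in J, S x ∂ν) :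
    ∫⁻ x, S x * g x ∂ν ≤ 2 * (∫⁻ x in V, S x ^ p ∂ν) ^ (1 / p) *
      (∫⁻ x in V \ ⋃ J ∈ D, J, g x ^ q ∂ν
        + ∑ J ∈ D, ((∫⁻ x in J, g x ∂ν) / ν J) ^ q * ν J) ^ (1 / q) := by
  have hp0 : 0 < p := hpq.pos
  have hq0 : 0 < q := hpq.symm.pos
  have hUm : MeasurableSet (⋃ J ∈ D, J) := D.measurableSet_biUnion hD
  have hUV : (⋃ J ∈ D, J) ⊆ V := iUnion₂_subset hDV
  set E := V \ ⋃ J ∈ D, J with hE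
  have e0 : ∫⁻ x, S x * g x ∂ν = ∫⁻ x in V, S x * g x ∂ν := by
    rw [← lintegral_indicator hV]
    congr 1; ext x
    by_cases hx : x ∈ V
    · simp [hx]
    · simp [hx, hSV x hx]
  have e1 : ∫⁻ x in V, S x * g x ∂ν = ∑ J ∈ D, ∫⁻ x in J, S x * g x ∂ν
      + ∫⁻ x in E, S x * g x ∂ν := by
    rw [← lintegral_biUnion_finset (t := fun J => J) hDd hD,
      ← lintegral_inter_add_sdiff (A := V) _ hUm, inter_eq_self_of_subset_right hUV]
  have hE1 : ∫⁻ x in E, S x * g x ∂ν ≤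
      (∫⁻ x in V, S x ^ p ∂ν) ^ (1 / p) * (∫⁻ x in E, g x ^ q ∂ν) ^ (1 / q) := by
    refine (ENNReal.lintegral_mul_le_Lp_mul_Lq (ν.restrict E) hpq hS.aemeasurable
      hg.aemeasurable).trans ?_
    gcongr
    exact sdiff_subset
  have hJ : ∀ J ∈ D, ∫⁻ x in J, S x * g x ∂ν ≤
      (∫⁻ x in J, S x ^ p ∂ν) ^ (1 / p) * (((∫⁻ x in J, g x ∂ν) / ν J) * (ν J) ^ (1 / q)) := by
    intro J hJ
    rw [hc J hJ]
    have := ENNReal.lintegral_mul_le_Lp_mul_Lq (ν.restrict J) hpq hS.aemeasurable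
      (measurable_const (a := (1 : ℝ≥0∞))).aemeasurable
    simp only [Pi.mul_apply, mul_one, ENNReal.one_rpow, lintegral_one,
      Measure.restrict_apply_univ] at this
    calc _ ≤ (∫⁻ x in J, g x ∂ν) / ν J *
          ((∫⁻ x in J, S x ^ p ∂ν) ^ (1 / p) * (ν J) ^ (1 / q)) := by gcongr
      _ = _ := by ring
  have hsum : ∑ J ∈ D, ∫⁻ x in J, S x * g x ∂ν ≤
      (∫⁻ x in V, S x ^ p ∂ν) ^ (1 / p) *
        (∑ J ∈ D, ((∫⁻ x in J, g x ∂ν) / ν J) ^ q * ν J) ^ (1 / q) := by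
    refine (Finset.sum_le_sum hJ).trans ((ENNReal.inner_le_Lp_mul_Lq D _ _ hpq).trans ?_)
    gcongr ?_ ^ _ * ?_ ^ _
    · simp only [← ENNReal.rpow_mul, one_div, inv_mul_cancel₀ hp0.ne', ENNReal.rpow_one]
      rw [← lintegral_biUnion_finset (t := fun J => J) hDd hD]
      exact lintegral_mono_set hUV
    · apply le_of_eq
      refine Finset.sum_congr rfl fun J _ => ?_
      rw [ENNReal.mul_rpow_of_nonneg _ _ hq0.le, ← ENNReal.rpow_mul, one_div,
        inv_mul_cancel₀ hq0.ne', ENNReal.rpow_one]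
  rw [e0, e1]
  calc _ ≤ (∫⁻ x in V, S x ^ p ∂ν) ^ (1 / p) *
        (∑ J ∈ D, ((∫⁻ x in J, g x ∂ν) / ν J) ^ q * ν J) ^ (1 / q) +
        (∫⁻ x in V, S x ^ p ∂ν) ^ (1 / p) * (∫⁻ x in E, g x ^ q ∂ν) ^ (1 / q) :=
        add_le_add hsum hE1
    _ ≤ (∫⁻ x in V, S x ^ p ∂ν) ^ (1 / p) *
        (∫⁻ x in E, g x ^ q ∂ν + ∑ J ∈ D, ((∫⁻ x in J, g x ∂ν) / ν J) ^ q * ν J) ^ (1 / q) +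
        (∫⁻ x in V, S x ^ p ∂ν) ^ (1 / p) * (∫⁻ x in E, g x ^ q ∂ν + 
        ∑ J ∈ D, ((∫⁻ x in J, g x ∂ν) / ν J) ^ q * ν J) ^ (1 / q) := by
        gcongr
        · exact le_add_self
        · exact le_self_add
    _ = _ := by ring

open Classical in
noncomputable def maxF (B : Finset (Set X)) : Finset (Set X) :=
  B.filter (fun G => ∀ J ∈ B, G ⊆ J → J = G)

lemma maxF_sub {B : Finset (Set X)} {G : Set X} (h : G ∈ maxF B) : G ∈ B := by
  classical exact (Finset.mem_filter.1 h).1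

lemma maxF_max {B : Finset (Set X)} {G : Set X} (h : G ∈ maxF B) {J : Set X} (hJ : J ∈ B)
    (hGJ : G ⊆ J) : J = G := by
  classical exact (Finset.mem_filter.1 h).2 J hJ hGJ

lemma exists_maxF {B : Finset (Set X)} {I : Set X} (h : I ∈ B) : ∃ G ∈ maxF B, I ⊆ G := by
  classical
  obtain ⟨G, hIG, hG⟩ := B.exists_le_maximal h
  refine ⟨G, Finset.mem_filter.2 ⟨hG.1, fun J hJ hGJ => ?_⟩, hIG⟩
  exact (subset_antisymm hGJ (hG.2 hJ hGJ)).symm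

lemma biUnion_maxF (B : Finset (Set X)) : (⋃ J ∈ maxF B, J) = ⋃ J ∈ B, J := by
  apply subset_antisymm
  · exact iUnion₂_subset fun J hJ => subset_biUnion_of_mem (u := fun J => J) (maxF_sub hJ)
  · refine iUnion₂_subset fun J hJ => ?_
    obtain ⟨G, hG, hJG⟩ := exists_maxF hJ
    exact hJG.trans (subset_biUnion_of_mem (u := fun J => J) hG)

def Nested (A : Finset (Set X)) : Prop :=
  ∀ I ∈ A, ∀ J ∈ A, I ⊆ J ∨ J ⊆ I ∨ Disjoint I J

lemma maxF_disj {A B : Finset (Set X)} (hA : Nested A) (hBA : B ⊆ A) :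
    (maxF B : Set (Set X)).PairwiseDisjoint id := by
  intro I hI J hJ hne
  have hI' := maxF_sub hI
  have hJ' := maxF_sub hJ
  rcases hA I (hBA hI') J (hBA hJ') with h | h | h
  · exact absurd (maxF_max hI hJ' h).symm hne
  · exact absurd (maxF_max hJ hI' h) hne
  · exact h

lemma div_mul_le' (a b : ℝ≥0∞) : a / b * b ≤ a := by
  rw [div_eq_mul_inv, mul_assoc]
  calc _ ≤ a * 1 := by gcongr; exact ENNReal.inv_mul_le_one b
    _ = a := mul_one a

lemma avg_mul (ν : Measure X) (J : Set X) (hJ : ν J < ∞) (g : X → ℝ≥0∞) :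
    (∫⁻ x in J, g x ∂ν) / ν J * ν J = ∫⁻ x in J, g x ∂ν := by
  by_cases h : ν J = 0
  · rw [h, mul_zero, setLIntegral_measure_zero _ _ h]
  · exact ENNReal.div_mul_cancel h hJ.ne

lemma exists_lev (A : Finset (Set X)) (a : Set X → ℝ≥0∞) (h0 : ∀ I ∈ A, a I ≠ 0)
    (h1 : ∀ I ∈ A, a I ≠ ∞) : ∃ lev : Set X → ℤ,
      (∀ I ∈ A, a I ≤ (2 : ℝ≥0∞) ^ ((lev I : ℝ) + 1)) ∧
      (∀ I ∈ A, ∀ J ∈ A, I ⊆ J → lev J ≤ lev I) ∧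
      (∀ I ∈ A, ∃ J ∈ A, I ⊆ J ∧ lev J = lev I ∧ (2 : ℝ≥0∞) ^ (lev I : ℝ) < a J) := by
  classical
  have hl : ∀ I, ∃ n : ℤ, I ∈ A → (2 : ℝ≥0∞) ^ (n : ℝ) < a I ∧ a I ≤ 2 ^ ((n : ℝ) + 1) := by
    intro I
    by_cases hI : I ∈ A
    · obtain ⟨n, hn⟩ := ENNReal.exists_mem_Ioc_zpow (h0 I hI) (h1 I hI)
        (y := 2) (by norm_num) (by norm_num)
      refine ⟨n, fun _ => ⟨?_, ?_⟩⟩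
      · rw [ENNReal.rpow_intCast]; exact hn.1
      · have : (n : ℝ) + 1 = ((n + 1 : ℤ) : ℝ) := by push_cast; rfl
        rw [this, ENNReal.rpow_intCast]; exact hn.2
    · exact ⟨0, fun h => absurd h hI⟩
  choose l hl using hl
  have hm : ∀ I, ∃ n : ℤ, I ∈ A → (∀ J ∈ A, I ⊆ J → l J ≤ n) ∧ ∃ J ∈ A, I ⊆ J ∧ l J = n := by
    intro I
    by_cases hI : I ∈ A
    · obtain ⟨J, hJ, hJm⟩ := (A.filter (fun J => I ⊆ J)).exists_max_image l
        ⟨I, Finset.mem_filter.2 ⟨hI, subset_rfl⟩⟩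
      have hJ' := Finset.mem_filter.1 hJ
      exact ⟨l J, fun _ => ⟨fun J' h h' => hJm J' (Finset.mem_filter.2 ⟨h, h'⟩),
        J, hJ'.1, hJ'.2, rfl⟩⟩
    · exact ⟨0, fun h => absurd h hI⟩
  choose lev hlev using hm
  have mono : ∀ I ∈ A, ∀ J ∈ A, I ⊆ J → lev J ≤ lev I := by
    intro I hI J hJ hIJ
    obtain ⟨J', hJ', hs, he⟩ := (hlev J hJ).2
    rw [← he]
    exact (hlev I hI).1 J' hJ' (hIJ.trans hs)
  refine ⟨lev, ?_, mono, ?_⟩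
  · intro I hI
    refine (hl I hI).2.trans ?_
    refine ENNReal.rpow_le_rpow_of_exponent_le (by norm_num) ?_
    have := (hlev I hI).1 I hI subset_rfl
    have : (l I : ℝ) ≤ lev I := by exact_mod_cast this
    linarith
  · intro I hI
    obtain ⟨J, hJ, hs, he⟩ := (hlev I hI).2
    refine ⟨J, hJ, hs, ?_, ?_⟩
    · apply le_antisymm (mono I hI J hJ hs)
      rw [← he]
      exact (hlev J hJ).1 J hJ subset_rfl
    · rw [← he]; exact (hl J hJ).1

noncomputable def cM (p : ℝ) : ℝ≥0∞ := 2 * cgeo (p - 1)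

noncomputable def cH (p q : ℝ) : ℝ≥0∞ := 4 * cM p ^ (1 / p) * (1 + 2 ^ p * cM p) ^ (1 / q)

open Classical in
lemma half0 {p q : ℝ} (hpq : p.HolderConjugate q) (μ ν : Measure X) (A : Finset (Set X))
    (hA : Nested A) (hmeas : ∀ I ∈ A, MeasurableSet I) (hμ : ∀ I ∈ A, μ I < ∞)
    (hν : ∀ I ∈ A, ν I < ∞) (α : Set X → ℝ≥0∞) (C : ℝ≥0∞) (f g : X → ℝ≥0∞)
    (hf : Measurable f) (hg : Measurable g) (F : ℝ≥0∞)
    (hF : ∫⁻ x, f x ^ p ∂μ ≤ F) (hG : ∫⁻ x, g x ^ q ∂ν ≤ F)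
    (htest : ∀ J ∈ A, ∫⁻ x in J, (∑ I ∈ A.filter (fun I => I ⊆ J), α I * I.indicator 1 x) ^ p ∂ν
      ≤ C ^ p * μ J)
    (hdom : ∀ J ∈ A, ((∫⁻ x in J, g x ∂ν) / ν J) ^ q * ν J ≤
      ((∫⁻ x in J, f x ∂μ) / μ J) ^ p * μ J)
    (h0 : ∀ I ∈ A, (∫⁻ x in I, f x ∂μ) / μ I ≠ 0)
    (h1 : ∀ I ∈ A, (∫⁻ x in I, f x ∂μ) / μ I ≠ ∞) :
    ∑ I ∈ A, α I * ((∫⁻ x in I, f x ∂μ) / μ I) * ∫⁻ x in I, g x ∂ν ≤ cH p q * C * F := by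
  have hp0 : 0 < p := hpq.pos
  have hq0 : 0 < q := hpq.symm.pos
  set a : Set X → ℝ≥0∞ := fun I => (∫⁻ x in I, f x ∂μ) / μ I with ha
  set b : Set X → ℝ≥0∞ := fun I => (∫⁻ x in I, g x ∂ν) / ν I with hb
  obtain ⟨lev, hl1, hl2, hl3⟩ := exists_lev A a h0 h1
  have hne : ∀ I ∈ A, I.Nonempty := by
    intro I hI
    by_contra h
    rw [not_nonempty_iff_eq_empty] at h
    apply h0 I hI
    simp [h]
  -- two sets above a common nonempty one are comparable
  have hcomp : ∀ I ∈ A, ∀ J ∈ A, ∀ x, x ∈ I → x ∈ J → lev I < lev J → J ⊆ I := by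
    intro I hI J hJ x hxI hxJ hlt
    rcases hA I hI J hJ with h | h | h
    · have := hl2 I hI J hJ h; omega
    · exact h
    · exact absurd hxJ (disjoint_left.1 h hxI)
  let B : ℤ → Finset (Set X) := fun k => A.filter (fun I => lev I = k)
  have hBA : ∀ k, B k ⊆ A := fun k => Finset.filter_subset _ _
  have hBl : ∀ {k I}, I ∈ B k → lev I = k := fun h => (Finset.mem_filter.1 h).2
  let V : ℤ → Set X := fun k => ⋃ J ∈ B k, J
  have hVmax : ∀ k, V k = ⋃ J ∈ maxF (B k), J := fun k => (biUnion_maxF (B k)).symm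
  let Q : ℤ → Finset (Set X) := fun k => A.filter (fun J => k < lev J ∧ ∃ I ∈ B k, J ⊆ I)
  have hQA : ∀ k, Q k ⊆ A := fun k => Finset.filter_subset _ _
  let D : ℤ → Finset (Set X) := fun k => maxF (Q k)
  have hDA : ∀ k, ∀ J ∈ D k, J ∈ A := fun k J hJ => hQA k (maxF_sub hJ)
  have hMA : ∀ k, ∀ J ∈ maxF (B k), J ∈ A := fun k J hJ => hBA k (maxF_sub hJ)
  let E : ℤ → Set X := fun k => V k \ ⋃ J ∈ D k, J
  let S : ℤ → X → ℝ≥0∞ := fun k x => ∑ I ∈ B k, α I * I.indicator 1 x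
  let K := A.image lev
  have hVm : ∀ k, MeasurableSet (V k) := fun k =>
    (B k).measurableSet_biUnion (fun J hJ => hmeas J (hBA k hJ))
  have hEm : ∀ k, MeasurableSet (E k) := fun k =>
    (hVm k).diff ((D k).measurableSet_biUnion (fun J hJ => hmeas J (hDA k J hJ)))
  have hind : ∀ I ∈ A, Measurable (I.indicator (1 : X → ℝ≥0∞)) := fun I hI =>
    measurable_one.indicator (hmeas I hI)
  have hSm : ∀ k, Measurable (S k) := fun k =>
    Finset.measurable_sum _ (fun I hI => (hind I (hBA k hI)).const_mul _)
  -- maximal sets have the right average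
  have hmaxa : ∀ k, ∀ G ∈ maxF (B k), (2 : ℝ≥0∞) ^ (k : ℝ) < a G := by
    intro k G hG
    have hGB := maxF_sub hG
    have hGk := hBl hGB
    obtain ⟨J, hJ, hs, hl, hlt⟩ := hl3 G (hBA k hGB)
    have : J ∈ B k := Finset.mem_filter.2 ⟨hJ, hl.trans hGk⟩
    rw [maxF_max hG this hs, hGk] at hlt
    exact hlt
  have hμV : ∀ k, μ (V k) = ∑ G ∈ maxF (B k), μ G := fun k => by
    rw [hVmax]
    exact measure_biUnion_finset (maxF_disj hA (hBA k)) (fun J hJ => hmeas J (hMA k J hJ))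
  have hμVfin : ∀ k, μ (V k) < ∞ := fun k => by
    rw [hμV]
    exact ENNReal.sum_lt_top.2 (fun G hG => hμ G (hMA k G hG))
  have hweak : ∀ k : ℤ, (2 : ℝ≥0∞) ^ (k : ℝ) * μ (V k) ≤ ∫⁻ x in V k, f x ∂μ := by
    intro k
    rw [hμV, hVmax, lintegral_biUnion_finset (t := fun J => J) (maxF_disj hA (hBA k))
      (fun J hJ => hmeas J (hMA k J hJ)), Finset.mul_sum]
    refine Finset.sum_le_sum fun G hG => ?_
    calc _ ≤ a G * μ G := by gcongr; exact (hmaxa k G hG).le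
      _ ≤ _ := div_mul_le' _ _
  have hstrong : ∑ k ∈ K, (2 : ℝ≥0∞) ^ ((k : ℝ) * p) * μ (V k) ≤ cM p * F :=
    (strong hpq.lt μ f hf K V hμVfin hweak).trans (by unfold cM; gcongr)
  -- testing
  have hST : ∀ k, ∫⁻ x in V k, S k x ^ p ∂ν ≤ C ^ p * μ (V k) := by
    intro k
    rw [hμV, hVmax, lintegral_biUnion_finset (t := fun J => J) (maxF_disj hA (hBA k))
      (fun J hJ => hmeas J (hMA k J hJ)), Finset.mul_sum]
    refine Finset.sum_le_sum fun G hG => ?_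
    refine le_trans ?_ (htest G (hMA k G hG))
    refine setLIntegral_mono' (hmeas G (hMA k G hG)) fun x hx => ?_
    gcongr ?_ ^ p
    have : ∀ I ∈ B k, I ∉ (B k).filter (fun I => I ⊆ G) → α I * I.indicator 1 x = 0 := by
      intro I hI hn
      have hn' : ¬ I ⊆ G := fun h => hn (Finset.mem_filter.2 ⟨hI, h⟩)
      have : x ∉ I := by
        rcases hA I (hBA k hI) G (hMA k G hG) with h | h | h
        · exact absurd h hn'
        · exact absurd (maxF_max hG hI h).subset hn'
        · exact fun hxI => disjoint_left.1 h hxI hx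
      simp [this]
    show ∑ I ∈ B k, α I * I.indicator 1 x ≤ _
    rw [← Finset.sum_subset (Finset.filter_subset _ _) this]
    exact Finset.sum_le_sum_of_subset (Finset.filter_subset_filter _ (hBA k))
  -- one level
  let H : ℤ → ℝ≥0∞ := fun k => ∫⁻ x in E k, g x ^ q ∂ν + ∑ J ∈ D k, b J ^ q * ν J
  have hlevel : ∀ k, ∫⁻ x, S k x * g x ∂ν ≤
      2 * (∫⁻ x in V k, S k x ^ p ∂ν) ^ (1 / p) * H k ^ (1 / q) := by
    intro k
    refine level_step hpq ν (S k) g (hSm k) hg (V k) (hVm k) ?_ (D k)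
      (fun J hJ => hmeas J (hDA k J hJ)) (maxF_disj hA (hQA k)) ?_ ?_
    · intro x hx
      refine Finset.sum_eq_zero fun I hI => ?_
      have : x ∉ I := fun h => hx (mem_biUnion (t := fun J : Set X => J) hI h)
      simp [this]
    · intro J hJ
      obtain ⟨_, _, I, hI, hs⟩ := Finset.mem_filter.1 (maxF_sub hJ)
      exact hs.trans (subset_biUnion_of_mem (u := fun J : Set X => J) hI)
    · intro J hJ
      have hJA := hDA k J hJ
      obtain ⟨_, hJl, _⟩ := Finset.mem_filter.1 (maxF_sub hJ)
      have hconst : ∃ s : ℝ≥0∞, ∀ x ∈ J, S k x = s := by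
        refine ⟨∑ I ∈ B k, α I * (if J ⊆ I then 1 else 0), fun x hx => ?_⟩
        refine Finset.sum_congr rfl fun I hI => ?_
        congr 1
        by_cases hxI : x ∈ I
        · have := hcomp I (hBA k hI) J hJA x hxI hx (by rw [hBl hI]; exact hJl)
          simp [hxI, this]
        · have : ¬ J ⊆ I := fun h => hxI (h hx)
          simp [hxI, this]
      obtain ⟨s, hs⟩ := hconst
      rw [setLIntegral_congr_fun (g := fun x => s * g x) (hmeas J hJA)
        (fun x hx => by simp only [hs x hx]),
        setLIntegral_congr_fun (f := S k) (g := fun x => s) (hmeas J hJA)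
        (fun x hx => hs x hx),
        lintegral_const_mul _ hg, setLIntegral_const]
      calc _ = s * ((∫⁻ x in J, g x ∂ν) / ν J * ν J) := by rw [avg_mul ν J (hν J hJA)]
        _ = _ := by ring
  -- sum of H
  have hEd : (K : Set ℤ).PairwiseDisjoint E := by
    have key : ∀ k k', k < k' → Disjoint (E k) (E k') := by
      intro k k' hlt
      rw [disjoint_left]
      rintro x ⟨hx1, hx2⟩ ⟨hx1', _⟩
      obtain ⟨I, hI, hxI⟩ := mem_iUnion₂.1 hx1
      obtain ⟨I', hI', hxI'⟩ := mem_iUnion₂.1 hx1'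
      apply hx2
      show x ∈ ⋃ J ∈ maxF (Q k), J
      rw [biUnion_maxF]
      refine mem_biUnion (t := fun J : Set X => J) (Finset.mem_coe.2 (Finset.mem_filter.2 
        ⟨hBA k' hI', ?_, I, hI, ?_⟩)) hxI'
      · rw [hBl hI']; exact hlt
      · exact hcomp I (hBA k hI) I' (hBA k' hI') x hxI hxI' (by rw [hBl hI, hBl hI']; exact hlt)
    intro k _ k' _ hne
    rcases lt_or_gt_of_ne hne with h | h
    · exact key k k' h
    · exact (key k' k h).symm
  have hDd : (K : Set ℤ).PairwiseDisjoint D := by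
    have key : ∀ k k', k < k' → Disjoint (D k) (D k') := by
      intro k k' hlt
      rw [Finset.disjoint_left]
      intro J hJ hJ'
      obtain ⟨hJA, hJl, I, hI, hs⟩ := Finset.mem_filter.1 (maxF_sub hJ)
      obtain ⟨_, hJl', I', hI', hs'⟩ := Finset.mem_filter.1 (maxF_sub hJ')
      obtain ⟨x, hx⟩ := hne J hJA
      have hII : I' ⊆ I := hcomp I (hBA k hI) I' (hBA k' hI') x (hs hx) (hs' hx)
        (by rw [hBl hI, hBl hI']; exact hlt)
      have : I' = J := maxF_max hJ (Finset.mem_filter.2 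
        ⟨hBA k' hI', by rw [hBl hI']; exact hlt, I, hI, hII⟩) hs'
      rw [← this, hBl hI'] at hJl'
      exact lt_irrefl _ hJl'
    intro k _ k' _ hne
    rcases lt_or_gt_of_ne hne with h | h
    · exact key k k' h
    · exact (key k' k h).symm
  have hDmax : ∀ k, ∀ J ∈ D k, J ∈ maxF (B (lev J)) := by
    intro k J hJ
    obtain ⟨hJA, hJl, I, hI, hs⟩ := Finset.mem_filter.1 (maxF_sub hJ)
    refine Finset.mem_filter.2 ⟨Finset.mem_filter.2 ⟨hJA, rfl⟩, fun J' hJ' hs' => ?_⟩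
    obtain ⟨x, hx⟩ := hne J hJA
    refine maxF_max hJ (Finset.mem_filter.2 
      ⟨hBA _ hJ', by rw [hBl hJ']; exact hJl, I, hI, ?_⟩) hs'
    exact hcomp I (hBA k hI) J' (hBA _ hJ') x (hs hx) (hs' hx)
      (by rw [hBl hI, hBl hJ']; exact hJl)
  have hMd : (K : Set ℤ).PairwiseDisjoint (fun k => maxF (B k)) := by
    intro k _ k' _ hne
    refine Finset.disjoint_left.2 fun J hJ hJ' => hne ?_
    rw [← hBl (maxF_sub hJ), ← hBl (maxF_sub hJ')]
  have hsumD : ∑ k ∈ K, ∑ J ∈ D k, b J ^ q * ν J ≤ 2 ^ p * (cM p * F) := by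
    calc ∑ k ∈ K, ∑ J ∈ D k, b J ^ q * ν J ≤ ∑ k ∈ K, ∑ J ∈ D k, a J ^ p * μ J :=
          Finset.sum_le_sum fun k _ => Finset.sum_le_sum fun J hJ => hdom J (hDA k J hJ)
      _ = ∑ J ∈ K.biUnion D, a J ^ p * μ J := (Finset.sum_biUnion hDd).symm
      _ ≤ ∑ J ∈ K.biUnion (fun k => maxF (B k)), a J ^ p * μ J := by
          refine Finset.sum_le_sum_of_subset fun J hJ => ?_
          obtain ⟨k, hk, hJk⟩ := Finset.mem_biUnion.1 hJ
          exact Finset.mem_biUnion.2 ⟨lev J, Finset.mem_image_of_mem _ (hDA k J hJk),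
            hDmax k J hJk⟩
      _ = ∑ k ∈ K, ∑ J ∈ maxF (B k), a J ^ p * μ J := Finset.sum_biUnion hMd
      _ ≤ ∑ k ∈ K, 2 ^ p * ((2 : ℝ≥0∞) ^ ((k : ℝ) * p) * μ (V k)) := by
          refine Finset.sum_le_sum fun k _ => ?_
          rw [hμV, Finset.mul_sum, Finset.mul_sum]
          refine Finset.sum_le_sum fun J hJ => ?_
          have := hl1 J (hMA k J hJ)
          rw [hBl (maxF_sub hJ)] at this
          calc a J ^ p * μ J ≤ ((2 : ℝ≥0∞) ^ ((k : ℝ) + 1)) ^ p * μ J := by gcongr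
            _ = _ := by
              rw [← ENNReal.rpow_mul, add_mul, one_mul, two_rpow_add]; ring
      _ = 2 ^ p * ∑ k ∈ K, ((2 : ℝ≥0∞) ^ ((k : ℝ) * p) * μ (V k)) := by rw [Finset.mul_sum]
      _ ≤ _ := by gcongr
  have hsumE : ∑ k ∈ K, ∫⁻ x in E k, g x ^ q ∂ν ≤ F := by
    rw [← lintegral_biUnion_finset hEd (fun k _ => hEm k)]
    exact (setLIntegral_le_lintegral _ _).trans hG
  have hsumH : ∑ k ∈ K, H k ≤ (1 + 2 ^ p * cM p) * F := by
    show ∑ k ∈ K, (_ + _) ≤ _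
    rw [Finset.sum_add_distrib]
    calc _ ≤ F + 2 ^ p * (cM p * F) := add_le_add hsumE hsumD
      _ = _ := by ring
  -- assemble
  have hsplit : ∑ I ∈ A, α I * a I * ∫⁻ x in I, g x ∂ν ≤
      ∑ k ∈ K, (2 * 2 ^ (k : ℝ)) * ∫⁻ x, S k x * g x ∂ν := by
    rw [← Finset.sum_fiberwise_of_maps_to (t := K) (g := lev)
      (fun I hI => Finset.mem_image_of_mem _ hI)]
    refine Finset.sum_le_sum fun k _ => ?_
    have : ∫⁻ x, S k x * g x ∂ν = ∑ I ∈ B k, α I * ∫⁻ x in I, g x ∂ν := by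
      simp only [S, Finset.sum_mul]
      rw [lintegral_finsetSum]
      · refine Finset.sum_congr rfl fun I hI => ?_
        rw [← lintegral_indicator (hmeas I (hBA k hI)),
          ← lintegral_const_mul _ (hg.indicator (hmeas I (hBA k hI)))]
        congr 1; ext x
        by_cases hx : x ∈ I <;> simp [hx]
      · intro I hI
        exact ((hind I (hBA k hI)).const_mul _).mul hg
    rw [this, Finset.mul_sum]
    refine Finset.sum_le_sum fun I hI => ?_
    have h := hl1 I (hBA k hI)
    rw [hBl hI, two_rpow_add, ENNReal.rpow_one] at h
    calc _ ≤ α I * (2 ^ (k : ℝ) * 2) * ∫⁻ x in I, g x ∂ν := by gcongr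
      _ = _ := by ring
  have hk : ∀ k : ℤ, (2 * 2 ^ (k : ℝ)) * ∫⁻ x, S k x * g x ∂ν ≤
      4 * C * (((2 : ℝ≥0∞) ^ ((k : ℝ) * p) * μ (V k)) ^ (1 / p) * H k ^ (1 / q)) := by
    intro k
    have e1 : (C ^ p * μ (V k)) ^ (1 / p) = C * μ (V k) ^ (1 / p) := by
      rw [ENNReal.mul_rpow_of_nonneg _ _ (by positivity), ← ENNReal.rpow_mul,
        mul_one_div_cancel hp0.ne', ENNReal.rpow_one]
    have e2 : ((2 : ℝ≥0∞) ^ ((k : ℝ) * p) * μ (V k)) ^ (1 / p) =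
        2 ^ (k : ℝ) * μ (V k) ^ (1 / p) := by
      rw [ENNReal.mul_rpow_of_nonneg _ _ (by positivity), ← ENNReal.rpow_mul, mul_assoc,
        mul_one_div_cancel hp0.ne', mul_one]
    calc _ ≤ (2 * 2 ^ (k : ℝ)) * (2 * (C ^ p * μ (V k)) ^ (1 / p) * H k ^ (1 / q)) := by
          gcongr
          refine (hlevel k).trans ?_
          gcongr
          exact hST k
      _ = _ := by rw [e1, e2]; ring
  calc _ ≤ ∑ k ∈ K, 4 * C * (((2 : ℝ≥0∞) ^ ((k : ℝ) * p) * μ (V k)) ^ (1 / p) * H k ^ (1 / q)) :=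
        hsplit.trans (Finset.sum_le_sum fun k _ => hk k)
    _ = 4 * C * ∑ k ∈ K, (((2 : ℝ≥0∞) ^ ((k : ℝ) * p) * μ (V k)) ^ (1 / p) * H k ^ (1 / q)) := by
        rw [Finset.mul_sum]
    _ ≤ 4 * C * ((∑ k ∈ K, (2 : ℝ≥0∞) ^ ((k : ℝ) * p) * μ (V k)) ^ (1 / p) *
          (∑ k ∈ K, H k) ^ (1 / q)) := by
        gcongr
        refine (ENNReal.inner_le_Lp_mul_Lq K _ _ hpq).trans (le_of_eq ?_)
        simp only [← ENNReal.rpow_mul, one_div, inv_mul_cancel₀ hp0.ne', inv_mul_cancel₀ hq0.ne',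
          ENNReal.rpow_one]
    _ ≤ 4 * C * ((cM p * F) ^ (1 / p) * ((1 + 2 ^ p * cM p) * F) ^ (1 / q)) := by
        gcongr
    _ = 4 * C * cM p ^ (1 / p) * (1 + 2 ^ p * cM p) ^ (1 / q) * (F ^ (1 / p) * F ^ (1 / q)) := by
        rw [ENNReal.mul_rpow_of_nonneg _ _ (by positivity),
          ENNReal.mul_rpow_of_nonneg _ _ (by positivity)]
        ring
    _ = _ := by
        rw [← ENNReal.rpow_add_of_nonneg _ _ (by positivity) (by positivity), one_div, one_div,
          hpq.inv_add_inv_eq_one, ENNReal.rpow_one]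
        unfold cH
        simp only [one_div]
        ring

lemma cH_lt_top {p q : ℝ} (hpq : p.HolderConjugate q) : cH p q < ∞ := by
  have hp0 : 0 < p := hpq.pos
  have hq0 : 0 < q := hpq.symm.pos
  have h1 : cM p < ∞ := ENNReal.mul_lt_top (by norm_num) (cgeo_lt_top (by linarith [hpq.lt]))
  unfold cH
  refine ENNReal.mul_lt_top (ENNReal.mul_lt_top (by norm_num) ?_) ?_
  · exact ENNReal.rpow_lt_top_of_nonneg (by positivity) h1.ne
  · refine ENNReal.rpow_lt_top_of_nonneg (by positivity) (ENNReal.add_lt_top.2 ⟨by simp, ?_⟩).ne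
    exact ENNReal.mul_lt_top (ENNReal.rpow_lt_top_of_nonneg hp0.le (by norm_num)) h1

lemma avg_ne_top {p : ℝ} (hp : 1 < p) (μ : Measure X) (I : Set X) (hI : μ I < ∞) (f : X → ℝ≥0∞)
    (hF : ∫⁻ x, f x ^ p ∂μ < ∞) : (∫⁻ x in I, f x ∂μ) / μ I ≠ ∞ := by
  by_cases h : μ I = 0
  · rw [setLIntegral_measure_zero _ _ h]; simp
  · refine (ENNReal.div_lt_top ?_ h).ne
    refine (lt_of_le_of_lt (b := ∫⁻ x in I, (1 + f x ^ p) ∂μ) (lintegral_mono fun x => ?_) ?_).ne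
    · rcases le_total (f x) 1 with h | h
      · exact h.trans le_self_add
      · refine le_trans ?_ le_add_self
        calc f x = f x ^ (1 : ℝ) := (ENNReal.rpow_one _).symm
          _ ≤ _ := ENNReal.rpow_le_rpow_of_exponent_le h hp.le
    · rw [lintegral_add_left measurable_const, setLIntegral_const, one_mul]
      exact ENNReal.add_lt_top.2 ⟨hI, (setLIntegral_le_lintegral _ _).trans_lt hF⟩

open Classical in
lemma half {p q : ℝ} (hpq : p.HolderConjugate q) (μ ν : Measure X) (A : Finset (Set X))
    (hA : Nested A) (hmeas : ∀ I ∈ A, MeasurableSet I) (hμ : ∀ I ∈ A, μ I < ∞)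
    (hν : ∀ I ∈ A, ν I < ∞) (α : Set X → ℝ≥0∞) (C : ℝ≥0∞) (f g : X → ℝ≥0∞)
    (hf : Measurable f) (hg : Measurable g) (F : ℝ≥0∞) (hFt : F < ∞)
    (hF : ∫⁻ x, f x ^ p ∂μ ≤ F) (hG : ∫⁻ x, g x ^ q ∂ν ≤ F)
    (htest : ∀ J ∈ A, ∫⁻ x in J, (∑ I ∈ A.filter (fun I => I ⊆ J), α I * I.indicator 1 x) ^ p ∂ν
      ≤ C ^ p * μ J) (A' : Finset (Set X)) (hA' : A' ⊆ A)
    (hdom : ∀ J ∈ A', ((∫⁻ x in J, g x ∂ν) / ν J) ^ q * ν J ≤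
      ((∫⁻ x in J, f x ∂μ) / μ J) ^ p * μ J) :
    ∑ I ∈ A', α I * ((∫⁻ x in I, f x ∂μ) / μ I) * ∫⁻ x in I, g x ∂ν ≤ cH p q * C * F := by
  have hp0 : 0 < p := hpq.pos
  let A1 := A'.filter (fun I => (∫⁻ x in I, f x ∂μ) / μ I ≠ 0)
  have h1' : A1 ⊆ A' := Finset.filter_subset _ _
  have h1 : A1 ⊆ A := h1'.trans hA'
  rw [← Finset.sum_subset h1']
  · refine half0 hpq μ ν A1 (fun I hI J hJ => hA I (h1 hI) J (h1 hJ)) (fun I hI => hmeas I (h1 hI))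
      (fun I hI => hμ I (h1 hI)) (fun I hI => hν I (h1 hI)) α C f g hf hg F hF hG ?_
      (fun I hI => hdom I (h1' hI)) (fun I hI => (Finset.mem_filter.1 hI).2)
      (fun I hI => avg_ne_top hpq.lt μ I (hμ I (h1 hI)) f (hF.trans_lt hFt))
    intro J hJ
    refine le_trans (lintegral_mono fun x => ?_) (htest J (h1 hJ))
    refine ENNReal.rpow_le_rpow ?_ hp0.le
    exact Finset.sum_le_sum_of_subset (Finset.filter_subset_filter _ h1)
  · intro I hI hn
    have : (∫⁻ x in I, f x ∂μ) / μ I = 0 := by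
      by_contra h
      exact hn (Finset.mem_filter.2 ⟨hI, h⟩)
    rw [this]; simp

open Classical in
lemma bilinear {p q : ℝ} (hpq : p.HolderConjugate q) (μ ν : Measure X) (A : Finset (Set X))
    (hA : Nested A) (hmeas : ∀ I ∈ A, MeasurableSet I) (hμ : ∀ I ∈ A, μ I < ∞)
    (hν : ∀ I ∈ A, ν I < ∞) (α : Set X → ℝ≥0∞) (C₁ C₂ : ℝ≥0∞) (f g : X → ℝ≥0∞)
    (hf : Measurable f) (hg : Measurable g) (F : ℝ≥0∞) (hFt : F < ∞)
    (hF : ∫⁻ x, f x ^ p ∂μ ≤ F) (hG : ∫⁻ x, g x ^ q ∂ν ≤ F)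
    (htest : ∀ J ∈ A, ∫⁻ x in J, (∑ I ∈ A.filter (fun I => I ⊆ J), α I * I.indicator 1 x) ^ p ∂ν
      ≤ C₁ ^ p * μ J)
    (htest' : ∀ J ∈ A, ∫⁻ x in J, (∑ I ∈ A.filter (fun I => I ⊆ J),
      (α I * (ν I / μ I)) * I.indicator 1 x) ^ q ∂μ ≤ C₂ ^ q * ν J) :
    ∑ I ∈ A, α I * ((∫⁻ x in I, f x ∂μ) / μ I) * ∫⁻ x in I, g x ∂ν
      ≤ (cH p q + cH q p) * (C₁ + C₂) * F := by
  have a1 := half hpq μ ν A hA hmeas hμ hν α C₁ f g hf hg F hFt hF hG htest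
    (A.filter (fun J => ((∫⁻ x in J, g x ∂ν) / ν J) ^ q * ν J ≤
      ((∫⁻ x in J, f x ∂μ) / μ J) ^ p * μ J)) (Finset.filter_subset _ _)
    (fun J hJ => (Finset.mem_filter.1 hJ).2)
  have a2 := half hpq.symm ν μ A hA hmeas hν hμ (fun I => α I * (ν I / μ I)) C₂ g f hg hf F hFt
    hG hF htest'
    (A.filter (fun J => ¬ ((∫⁻ x in J, g x ∂ν) / ν J) ^ q * ν J ≤
      ((∫⁻ x in J, f x ∂μ) / μ J) ^ p * μ J)) (Finset.filter_subset _ _)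
    (fun J hJ => (not_le.1 (Finset.mem_filter.1 hJ).2).le)
  have e : ∀ I ∈ A, α I * (ν I / μ I) * ((∫⁻ x in I, g x ∂ν) / ν I) * ∫⁻ x in I, f x ∂μ =
      α I * ((∫⁻ x in I, f x ∂μ) / μ I) * ∫⁻ x in I, g x ∂ν := by
    intro I hI
    conv_rhs => rw [← avg_mul ν I (hν I hI) g]
    simp only [div_eq_mul_inv]
    ring
  rw [Finset.sum_congr rfl (fun I hI => e I (Finset.filter_subset _ _ hI))] at a2
  rw [← Finset.sum_filter_add_sum_filter_not A (fun J => ((∫⁻ x in J, g x ∂ν) / ν J) ^ q * ν J ≤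
      ((∫⁻ x in J, f x ∂μ) / μ J) ^ p * μ J)]
  calc _ ≤ cH p q * C₁ * F + cH q p * C₂ * F := add_le_add a1 a2
    _ ≤ cH p q * (C₁ + C₂) * F + cH q p * (C₁ + C₂) * F := by
        gcongr
        · exact le_self_add
        · exact le_add_self
    _ = _ := by ring

open Classical in
lemma finite_bound {p q : ℝ} (hpq : p.HolderConjugate q) (μ ν : Measure X) (A : Finset (Set X))
    (hA : Nested A) (hmeas : ∀ I ∈ A, MeasurableSet I) (hμ : ∀ I ∈ A, μ I < ∞)
    (hν : ∀ I ∈ A, ν I < ∞) (α : Set X → ℝ≥0∞) (hα : ∀ I ∈ A, α I < ∞) (C₁ C₂ : ℝ≥0∞)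
    (f : X → ℝ≥0∞) (hf : Measurable f) (hFt : ∫⁻ x, f x ^ p ∂μ < ∞) (hF0 : ∫⁻ x, f x ^ p ∂μ ≠ 0)
    (htest : ∀ J ∈ A, ∫⁻ x in J, (∑ I ∈ A.filter (fun I => I ⊆ J), α I * I.indicator 1 x) ^ p ∂ν
      ≤ C₁ ^ p * μ J)
    (htest' : ∀ J ∈ A, ∫⁻ x in J, (∑ I ∈ A.filter (fun I => I ⊆ J),
      (α I * (ν I / μ I)) * I.indicator 1 x) ^ q ∂μ ≤ C₂ ^ q * ν J) :
    ∫⁻ x, (∑ I ∈ A, α I * avgOp μ I f x) ^ p ∂ν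
      ≤ ((cH p q + cH q p) * (C₁ + C₂)) ^ p * ∫⁻ x, f x ^ p ∂μ := by
  have hp0 : 0 < p := hpq.pos
  have hq0 : 0 < q := hpq.symm.pos
  set F := ∫⁻ x, f x ^ p ∂μ with hFdef
  set T : X → ℝ≥0∞ := fun x => ∑ I ∈ A, α I * avgOp μ I f x with hT
  have hTm : Measurable T := Finset.measurable_sum _ (fun I hI =>
    (measurable_const.indicator (hmeas I hI)).const_mul _)
  set N := ∫⁻ x, T x ^ p ∂ν with hN
  change N ≤ _
  have hNt : N < ∞ := by
    have hb : ∀ x, T x ^ p ≤ (⋃ J ∈ A, J).indicator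
        (fun _ => (∑ I ∈ A, α I * ((∫⁻ x in I, f x ∂μ) / μ I)) ^ p) x := by
      intro x
      by_cases hx : x ∈ ⋃ J ∈ A, J
      · rw [indicator_of_mem hx]
        refine ENNReal.rpow_le_rpow (Finset.sum_le_sum fun I _ => ?_) hp0.le
        gcongr
        exact indicator_le_self _ _ x
      · rw [indicator_of_notMem hx]
        have : T x = 0 := by
          refine Finset.sum_eq_zero fun I hI => ?_
          have : x ∉ I := fun h => hx (mem_biUnion (t := fun J : Set X => J) hI h)
          simp [avgOp, this]
        rw [this, ENNReal.zero_rpow_of_pos hp0]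
    refine (lintegral_mono hb).trans_lt ?_
    rw [lintegral_indicator (A.measurableSet_biUnion hmeas), setLIntegral_const]
    refine ENNReal.mul_lt_top (ENNReal.rpow_lt_top_of_nonneg hp0.le ?_) ?_
    · refine (ENNReal.sum_lt_top.2 fun I hI => ?_).ne
      exact ENNReal.mul_lt_top (hα I hI)
        (lt_top_iff_ne_top.2 (avg_ne_top hpq.lt μ I (hμ I hI) f hFt))
    · exact (measure_biUnion_finset_le A (fun J => J)).trans_lt
        (ENNReal.sum_lt_top.2 fun I hI => hν I hI)
  by_cases hN0 : N = 0
  · rw [hN0]; exact zero_le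
  set t : ℝ≥0∞ := (F / N) ^ (1 / q) with ht
  set g : X → ℝ≥0∞ := fun x => t * T x ^ (p - 1) with hgdef
  have hgm : Measurable g := (hTm.pow_const _).const_mul _
  have hpq1 : (p - 1) * q = p := hpq.sub_one_mul_conj
  have hG : ∫⁻ x, g x ^ q ∂ν = F := by
    have : ∀ x, g x ^ q = F / N * T x ^ p := by
      intro x
      simp only [hgdef, ht]
      rw [ENNReal.mul_rpow_of_nonneg _ _ hq0.le, ← ENNReal.rpow_mul, ← ENNReal.rpow_mul,
        one_div_mul_cancel hq0.ne', ENNReal.rpow_one, hpq1]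
    simp only [this]
    rw [lintegral_const_mul _ (hTm.pow_const _)]
    exact ENNReal.div_mul_cancel hN0 hNt.ne
  have hbil := bilinear hpq μ ν A hA hmeas hμ hν α C₁ C₂ f g hf hgm F hFt le_rfl hG.le htest htest'
  have hform : ∑ I ∈ A, α I * ((∫⁻ x in I, f x ∂μ) / μ I) * ∫⁻ x in I, g x ∂ν = t * N := by
    have h1 : ∀ I ∈ A, α I * ((∫⁻ x in I, f x ∂μ) / μ I) * ∫⁻ x in I, g x ∂ν =
        ∫⁻ x, α I * avgOp μ I f x * g x ∂ν := by
      intro I hI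
      rw [← lintegral_indicator (hmeas I hI) g, ← lintegral_const_mul _ (hgm.indicator (hmeas I hI))]
      congr 1; ext x
      by_cases hx : x ∈ I <;> simp [avgOp, hx]
    rw [Finset.sum_congr rfl h1, ← lintegral_finsetSum]
    · rw [hN, ← lintegral_const_mul _ (hTm.pow_const _)]
      congr 1; ext x
      rw [← Finset.sum_mul]
      change T x * (t * T x ^ (p - 1)) = _
      calc _ = t * (T x ^ (1 : ℝ) * T x ^ (p - 1)) := by rw [ENNReal.rpow_one]; ring
        _ = _ := by
          rw [← ENNReal.rpow_add_of_nonneg _ _ (by norm_num) (by linarith [hpq.lt])]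
          congr 2; ring
    · intro I hI
      exact ((measurable_const.indicator (hmeas I hI)).const_mul _).mul hgm
  rw [hform] at hbil
  set Z := (cH p q + cH q p) * (C₁ + C₂) with hZ
  have hinv : 1 / p + 1 / q = 1 := by
    rw [one_div, one_div]; exact hpq.inv_add_inv_eq_one
  have hsplitN : N = N ^ (1 / p) * N ^ (1 / q) := by
    rw [← ENNReal.rpow_add_of_nonneg _ _ (by positivity) (by positivity), hinv, ENNReal.rpow_one]
  have hsplitF : F = F ^ (1 / p) * F ^ (1 / q) := by
    rw [← ENNReal.rpow_add_of_nonneg _ _ (by positivity) (by positivity), hinv, ENNReal.rpow_one]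
  have htN : t * N = F ^ (1 / q) * N ^ (1 / p) := by
    have h1 : t * N ^ (1 / q) = F ^ (1 / q) := by
      rw [ht, ← ENNReal.mul_rpow_of_nonneg _ _ (by positivity), ENNReal.div_mul_cancel hN0 hNt.ne]
    calc t * N = t * (N ^ (1 / p) * N ^ (1 / q)) := by rw [← hsplitN]
      _ = (t * N ^ (1 / q)) * N ^ (1 / p) := by ring
      _ = _ := by rw [h1]
  have hfin : N ^ (1 / p) ≤ Z * F ^ (1 / p) := by
    have h2 : F ^ (1 / q) * N ^ (1 / p) ≤ F ^ (1 / q) * (Z * F ^ (1 / p)) := by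
      rw [← htN]
      refine hbil.trans (le_of_eq ?_)
      conv_lhs => rw [hsplitF]
      ring
    refine (ENNReal.mul_le_mul_iff_right ?_ ?_).1 h2
    · exact (ENNReal.rpow_pos (pos_iff_ne_zero.2 hF0) hFt.ne).ne'
    · exact (ENNReal.rpow_lt_top_of_nonneg (by positivity) hFt.ne).ne
  have := ENNReal.rpow_le_rpow hfin hp0.le
  rw [ENNReal.mul_rpow_of_nonneg _ _ hp0.le, ← ENNReal.rpow_mul, ← ENNReal.rpow_mul,
    one_div_mul_cancel hp0.ne', ENNReal.rpow_one, ENNReal.rpow_one] at this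
  exact this

lemma gen_refine (L : LatticeFamily X) (n : ℤ) (d : ℕ) : ∀ I ∈ L.gen n,
    ∃ S ⊆ L.gen (n + d), I = ⋃₀ S := by
  induction d with
  | zero => intro I hI; exact ⟨{I}, by simpa using hI, by simp⟩
  | succ d ih =>
    intro I hI
    obtain ⟨S, hS, rfl⟩ := ih I hI
    refine ⟨{K | K ∈ L.gen (n + (d + 1 : ℕ)) ∧ ∃ J ∈ S, K ⊆ J}, fun K hK => hK.1, ?_⟩
    ext x
    constructor
    · rintro ⟨J, hJ, hx⟩
      obtain ⟨S', hS', rfl⟩ := L.subdiv _ J (hS hJ)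
      obtain ⟨K, hK, hxK⟩ := hx
      refine ⟨K, ⟨?_, _, hJ, subset_sUnion_of_mem hK⟩, hxK⟩
      have := hS' hK
      push_cast
      rwa [← add_assoc]
    · rintro ⟨K, ⟨_, J, hJ, hs⟩, hxK⟩
      exact ⟨J, hJ, hs hxK⟩

lemma gen_nested (L : LatticeFamily X) {n m : ℤ} (h : n ≤ m) {I J : Set X} (hI : I ∈ L.gen n)
    (hJ : J ∈ L.gen m) : J ⊆ I ∨ Disjoint I J := by
  obtain ⟨d, rfl⟩ := Int.le.dest h
  obtain ⟨S, hS, rfl⟩ := gen_refine L n d I hI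
  by_cases hd : Disjoint (⋃₀ S) J
  · exact Or.inr hd
  · left
    obtain ⟨x, ⟨K, hK, hxK⟩, hxJ⟩ := not_disjoint_iff.1 hd
    have : K = J := by
      by_contra hne
      exact disjoint_left.1 (L.pairwiseDisjoint _ (hS hK) hJ hne) hxK hxJ
    rw [← this]
    exact subset_sUnion_of_mem hK

lemma sets_nested (L : LatticeFamily X) {I J : Set X} (hI : I ∈ L.sets) (hJ : J ∈ L.sets) :
    I ⊆ J ∨ J ⊆ I ∨ Disjoint I J := by
  obtain ⟨n, hn⟩ := mem_iUnion.1 hI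
  obtain ⟨m, hm⟩ := mem_iUnion.1 hJ
  rcases le_total n m with h | h
  · exact Or.inr (gen_nested L h hn hm)
  · rcases gen_nested L h hm hn with h | h
    · exact Or.inl h
    · exact Or.inr (Or.inr h.symm)

lemma sets_meas (L : LatticeFamily X) {I : Set X} (hI : I ∈ L.sets) : MeasurableSet I := by
  obtain ⟨n, hn⟩ := mem_iUnion.1 hI
  exact L.meas n I hn

lemma sets_countable (L : LatticeFamily X) : L.sets.Countable :=
  countable_iUnion L.countable

open Classical in
/-- A finite sub-sum is dominated by the full sum over the lattice. -/
lemma sub_sum_le (L : LatticeFamily X) (A : Finset (Set X)) (hA : ∀ I ∈ A, I ∈ L.sets)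
    (J : Set X) (w : Set X → ℝ≥0∞) :
    ∑ I ∈ A.filter (fun I => I ⊆ J), w I ≤
      ∑' I : {I : Set X // I ∈ L.sets ∧ I ⊆ J}, w I.1 := by
  have h : ∀ I ∈ A.filter (fun I => I ⊆ J), I ∈ L.sets ∧ I ⊆ J := fun I hI =>
    ⟨hA I (Finset.mem_filter.1 hI).1, (Finset.mem_filter.1 hI).2⟩
  rw [← Finset.sum_subtype_of_mem w h]
  exact ENNReal.sum_le_tsum _

lemma tsum_bound {p : ℝ} (hp : 0 < p) (L : LatticeFamily X) (ν : Measure X)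
    (w : Set X → X → ℝ≥0∞) (hw : ∀ I ∈ L.sets, Measurable (w I)) (R : ℝ≥0∞)
    (h : ∀ A : Finset (Set X), (∀ I ∈ A, I ∈ L.sets) → ∫⁻ x, (∑ I ∈ A, w I x) ^ p ∂ν ≤ R) :
    ∫⁻ x, (∑' I : L.sets, w I.1 x) ^ p ∂ν ≤ R := by
  classical
  have : Countable L.sets := (sets_countable L).to_subtype
  have e : ∀ x, (∑' I : L.sets, w I.1 x) ^ p =
      ⨆ A : Finset L.sets, (∑ I ∈ A, w I.1 x) ^ p := by
    intro x
    rw [ENNReal.tsum_eq_iSup_sum]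
    exact (ENNReal.orderIsoRpow p hp).map_iSup _
  simp only [e]
  rw [lintegral_iSup_directed]
  · refine iSup_le fun A => ?_
    have := h (A.map (Function.Embedding.subtype _)) (by
      intro I hI
      obtain ⟨I', _, rfl⟩ := Finset.mem_map.1 hI
      exact I'.2)
    simpa only [Finset.sum_map, Function.Embedding.subtype_apply] using this
  · intro A
    exact ((Finset.measurable_sum _ fun I _ => hw I.1 I.2).pow_const _).aemeasurable
  · refine Monotone.directed_le fun A A' hAA' x => ?_
    exact ENNReal.rpow_le_rpow (Finset.sum_le_sum_of_subset hAA') hp.le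

end TW

/-- If the two testing conditions hold with constants `C₁, C₂`, then the
positive operator `T_α f = ∑_{I ∈ 𝓛} α_I · E_I^μ f` is bounded from `L^p(μ)` to `L^p(ν)`
with norm at most `c(p) · (C₁ + C₂)`. -/
theorem two_weight_sufficiency (p p' : ℝ) (hp : 1 < p) (hpp' : 1 / p + 1 / p' = 1) :
    ∃ c : ℝ≥0∞, 0 < c ∧ c < ∞ ∧
      ∀ (X : Type) [MeasurableSpace X] (L : LatticeFamily X) (μ ν : Measure X),
        (∀ I ∈ L.sets, 0 < μ I ∧ μ I < ∞) → (∀ I ∈ L.sets, ν I < ∞) →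
        ∀ (α : Set X → ℝ≥0) (C₁ C₂ : ℝ≥0∞),
        (∀ J ∈ L.sets,
          ∫⁻ x in J, (∑' I : {I : Set X // I ∈ L.sets ∧ I ⊆ J},
              (α I.1 : ℝ≥0∞) * I.1.indicator 1 x) ^ p ∂ν ≤ C₁ ^ p * μ J) →
        (∀ J ∈ L.sets,
          ∫⁻ x in J, (∑' I : {I : Set X // I ∈ L.sets ∧ I ⊆ J},
              (α I.1 : ℝ≥0∞) * (ν I.1 / μ I.1) * I.1.indicator 1 x) ^ p' ∂μ
            ≤ C₂ ^ p' * ν J) →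
        ∀ f : X → ℝ≥0∞, Measurable f →
          ∫⁻ x, (∑' I : L.sets, (α I.1 : ℝ≥0∞) * avgOp μ I.1 f x) ^ p ∂ν
            ≤ (c * (C₁ + C₂)) ^ p * ∫⁻ x, f x ^ p ∂μ := by
  have hp0 : 0 < p := by linarith
  have hpq : p.HolderConjugate p' := by
    rw [Real.holderConjugate_iff]
    exact ⟨hp, by simpa [one_div] using hpp'⟩
  have hq0 : 0 < p' := hpq.symm.pos
  refine ⟨1 + (TW.cH p p' + TW.cH p' p), by simp, ?_, ?_⟩
  · exact ENNReal.add_lt_top.2 ⟨by simp, ENNReal.add_lt_top.2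
      ⟨TW.cH_lt_top hpq, TW.cH_lt_top hpq.symm⟩⟩
  intro X _ L μ ν hμ hν α C₁ C₂ ht1 ht2 f hf
  classical
  refine TW.tsum_bound hp0 L ν (fun I x => (α I : ℝ≥0∞) * avgOp μ I f x) (fun I hI =>
    (measurable_const.indicator (TW.sets_meas L hI)).const_mul _) _ ?_
  intro A hA
  by_cases hF0 : ∫⁻ x, f x ^ p ∂μ = 0
  · have hf0 : f =ᵐ[μ] 0 := by
      rw [lintegral_eq_zero_iff (hf.pow_const p)] at hF0
      filter_upwards [hF0] with x hx
      exact (ENNReal.rpow_eq_zero_iff_of_pos hp0).1 hx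
    have hav : ∀ I x, avgOp μ I f x = 0 := by
      intro I x
      have : ∫⁻ y in I, f y ∂μ = 0 := by
        rw [lintegral_congr_ae (ae_restrict_of_ae hf0)]; simp
      simp [avgOp, this]
    simp [hav, ENNReal.zero_rpow_of_pos hp0]
  have htest1 : ∀ J ∈ A, ∫⁻ x in J, (∑ I ∈ A.filter (fun I => I ⊆ J),
      (α I : ℝ≥0∞) * I.indicator 1 x) ^ p ∂ν ≤ C₁ ^ p * μ J := by
    intro J hJ
    refine le_trans (lintegral_mono fun x => ?_) (ht1 J (hA J hJ))
    exact ENNReal.rpow_le_rpow (TW.sub_sum_le L A hA J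
      (fun I => (α I : ℝ≥0∞) * I.indicator 1 x)) hp0.le
  have htest2 : ∀ J ∈ A, ∫⁻ x in J, (∑ I ∈ A.filter (fun I => I ⊆ J),
      ((α I : ℝ≥0∞) * (ν I / μ I)) * I.indicator 1 x) ^ p' ∂μ ≤ C₂ ^ p' * ν J := by
    intro J hJ
    refine le_trans (lintegral_mono fun x => ?_) (ht2 J (hA J hJ))
    exact ENNReal.rpow_le_rpow (TW.sub_sum_le L A hA J
      (fun I => (α I : ℝ≥0∞) * (ν I / μ I) * I.indicator 1 x)) hq0.le
  by_cases hFt : ∫⁻ x, f x ^ p ∂μ = ∞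
  · by_cases hC : C₁ + C₂ = 0
    · have hC1 : C₁ = 0 := (add_eq_zero.1 hC).1
      -- every term vanishes almost everywhere
      have hz : ∀ I ∈ A, ∀ᵐ x ∂ν, (α I : ℝ≥0∞) * avgOp μ I f x = 0 := by
        intro I hI
        have hIm := TW.sets_meas L (hA I hI)
        have h := htest1 I hI
        rw [hC1, ENNReal.zero_rpow_of_pos hp0, zero_mul] at h
        have h2 : ∫⁻ x in I, (α I : ℝ≥0∞) ^ p ∂ν ≤ 0 := by
          refine le_trans (setLIntegral_mono' hIm fun x hx => ?_) h
          refine ENNReal.rpow_le_rpow ?_ hp0.le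
          have := Finset.single_le_sum (f := fun I : Set X => (α I : ℝ≥0∞) * I.indicator 1 x)
            (fun _ _ => zero_le) (Finset.mem_filter.2 ⟨hI, subset_rfl⟩ :
              I ∈ A.filter (fun I' => I' ⊆ I))
          simpa [hx] using this
        rw [setLIntegral_const, nonpos_iff_eq_zero, mul_eq_zero,
          ENNReal.rpow_eq_zero_iff_of_pos hp0] at h2
        rcases h2 with h2 | h2
        · simp [h2]
        · have : ∀ᵐ x ∂ν, x ∉ I := measure_eq_zero_iff_ae_notMem.1 h2
          filter_upwards [this] with x hx
          simp [avgOp, hx]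
      have hz' : ∀ᵐ x ∂ν, ∀ I ∈ A, (α I : ℝ≥0∞) * avgOp μ I f x = 0 :=
        (ae_ball_iff A.countable_toSet).2 hz
      have : ∫⁻ x, (∑ I ∈ A, (α I : ℝ≥0∞) * avgOp μ I f x) ^ p ∂ν = 0 := by
        rw [← lintegral_zero (μ := ν)]
        apply lintegral_congr_ae
        filter_upwards [hz'] with x hx
        rw [Finset.sum_eq_zero hx, ENNReal.zero_rpow_of_pos hp0]
      rw [this]; exact zero_le
    · rw [hFt, ENNReal.mul_top]
      · exact le_top
      · intro h
        rw [ENNReal.rpow_eq_zero_iff_of_pos hp0, mul_eq_zero] at h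
        rcases h with h | h
        · simp at h
        · exact hC h
  · refine (TW.finite_bound hpq μ ν A (fun I hI J hJ => TW.sets_nested L (hA I hI) (hA J hJ))
      (fun I hI => TW.sets_meas L (hA I hI)) (fun I hI => (hμ I (hA I hI)).2)
      (fun I hI => hν I (hA I hI)) (fun I => (α I : ℝ≥0∞)) (fun I _ => ENNReal.coe_lt_top) C₁ C₂ f hf
      (lt_top_iff_ne_top.2 hFt) hF0 htest1 htest2).trans ?_
    have hle : TW.cH p p' + TW.cH p' p ≤ 1 + (TW.cH p p' + TW.cH p' p) := le_add_self
    exact mul_le_mul_left (ENNReal.rpow_le_rpow (mul_le_mul_left hle _) hp0.le) _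
end

section
/- Let 1 < p < ∞ and 1/p + 1/p' = 1. Suppose T_α f := Σ_{I ∈ 𝓛} α_I · E_I^μ f is bounded from L^p(μ) to L^p(ν) with norm ‖T_α‖. Then both testing conditions hold with constants comparable to ‖T_α‖: (i) for every J ∈ 𝓛, ∫_J (Σ_{I ∈ 𝓛, I ⊆ J} α_I · 1_I)^p dν ≤ C · ‖T_α‖^p · μ(J), and (ii) for every J ∈ 𝓛, ∫_J (Σ_{I ∈ 𝓛, I ⊆ J} α_I · (ν(I)/μ(I)) · 1_I)^{p'} dμ ≤ C · ‖T_α‖^{p'} · ν(J), where C depends only on p. -/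
open MeasureTheory ENNReal NNReal Set Filter

lemma lattice_sets_countable {X : Type*} [MeasurableSpace X] (L : LatticeFamily X) :
    L.sets.Countable := Set.countable_iUnion L.countable

lemma lattice_sets_meas {X : Type*} [MeasurableSpace X] (L : LatticeFamily X)
    {I : Set X} (hI : I ∈ L.sets) : MeasurableSet I := by
  obtain ⟨n, hn⟩ := Set.mem_iUnion.1 hI
  exact L.meas n I hn

lemma sub_tsum_le {X : Type*} (S : Set (Set X)) (J : Set X) (F : Set X → ℝ≥0∞) :
    ∑' I : {I : Set X // I ∈ S ∧ I ⊆ J}, F I.1 ≤ ∑' I : S, F I.1 := by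
  refine ENNReal.tsum_comp_le_tsum_of_injective
    (f := fun I : {I : Set X // I ∈ S ∧ I ⊆ J} => (⟨I.1, I.2.1⟩ : S)) ?_ (fun I : S => F I.1)
  intro a b h
  apply Subtype.ext
  simpa using h

/-- Abstract final step: solving `A ≤ (N^p A)^(1/p) B^(1/q)`. -/
lemma solve_ineq {p q : ℝ} (h : p.HolderConjugate q) {A N B : ℝ≥0∞} (hA : A ≠ ∞)
    (hle : A ≤ (N ^ p * A) ^ (1 / p) * B ^ (1 / q)) : A ≤ N ^ q * B := by
  rcases eq_or_ne A 0 with h0 | h0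
  · simp [h0]
  have hp := h.pos
  have hq := h.symm.pos
  rw [ENNReal.mul_rpow_of_nonneg _ _ (by positivity), ← ENNReal.rpow_mul,
    mul_one_div_cancel hp.ne', ENNReal.rpow_one] at hle
  have hAp0 : A ^ (1 / p) ≠ 0 := by
    simp [ENNReal.rpow_eq_zero_iff, h0, hA]
  have hApt : A ^ (1 / p) ≠ ∞ := ENNReal.rpow_ne_top_of_nonneg (by positivity) hA
  have hsplit : A = A ^ (1 / p) * A ^ (1 / q) := by
    rw [← ENNReal.rpow_add _ _ h0 hA]
    have := h.inv_add_inv_eq_one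
    rw [one_div, one_div, this, ENNReal.rpow_one]
  have h2 : A ^ (1 / p) * A ^ (1 / q) ≤ A ^ (1 / p) * (N * B ^ (1 / q)) := by
    rw [← hsplit]
    calc A ≤ _ := hle
      _ = _ := by ring
  have h3 := (ENNReal.mul_le_mul_iff_right hAp0 hApt).1 h2
  have h4 := ENNReal.rpow_le_rpow h3 hq.le
  rw [ENNReal.mul_rpow_of_nonneg _ _ hq.le, ← ENNReal.rpow_mul, ← ENNReal.rpow_mul,
    one_div_mul_cancel hq.ne', ENNReal.rpow_one, ENNReal.rpow_one] at h4
  exact h4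

lemma lintegral_rpow_le_of_trunc {X : Type*} [MeasurableSpace X] (μ : Measure X)
    (g : X → ℝ≥0∞) (hg : Measurable g) {q : ℝ} (hq : 0 < q) (C : ℝ≥0∞)
    (h : ∀ n : ℕ, ∫⁻ x, (min (g x) n) ^ q ∂μ ≤ C) : ∫⁻ x, g x ^ q ∂μ ≤ C := by
  have hlim : ∀ x, Tendsto (fun n : ℕ => (min (g x) n) ^ q) atTop (nhds (g x ^ q)) := by
    intro x
    have h1 : Tendsto (fun n : ℕ => min (g x) (n : ℝ≥0∞)) atTop (nhds (min (g x) ∞)) :=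
      tendsto_const_nhds.min ENNReal.tendsto_nat_nhds_top
    rw [min_eq_left le_top] at h1
    exact (ENNReal.continuous_rpow_const.tendsto _).comp h1
  have := lintegral_tendsto_of_tendsto_of_monotone (μ := μ)
    (f := fun n : ℕ => fun x => (min (g x) (n : ℝ≥0∞)) ^ q) (F := fun x => g x ^ q)
    (fun n => ((hg.min measurable_const).pow_const q).aemeasurable)
    (.of_forall fun x n m hnm => by
      show (min (g x) (n : ℝ≥0∞)) ^ q ≤ (min (g x) (m : ℝ≥0∞)) ^ q
      gcongr) (.of_forall hlim)
  exact le_of_tendsto' this h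

lemma dual_id {X : Type*} [MeasurableSpace X] (S : Set (Set X)) (hS : S.Countable)
    (hm : ∀ I ∈ S, MeasurableSet I) (μ ν : Measure X) (α : Set X → ℝ≥0) (J : Set X)
    (f : X → ℝ≥0∞) (hf : Measurable f) :
    ∫⁻ x in J, (∑' I : {I : Set X // I ∈ S ∧ I ⊆ J},
        (α I.1 : ℝ≥0∞) * (ν I.1 / μ I.1) * I.1.indicator 1 x) * f x ∂μ
      = ∫⁻ x in J, (∑' I : {I : Set X // I ∈ S ∧ I ⊆ J},
        (α I.1 : ℝ≥0∞) * avgOp μ I.1 f x) ∂ν := by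
  have : Countable {I : Set X // I ∈ S ∧ I ⊆ J} := (hS.mono (fun I hI => hI.1)).to_subtype
  simp_rw [← ENNReal.tsum_mul_right]
  rw [lintegral_tsum, lintegral_tsum]
  · refine tsum_congr fun I => ?_
    have hI := hm I.1 I.2.1
    have e1 : ∀ x, (α I.1 : ℝ≥0∞) * (ν I.1 / μ I.1) * I.1.indicator 1 x * f x
        = (α I.1 : ℝ≥0∞) * (ν I.1 / μ I.1) * I.1.indicator f x := by
      intro x
      by_cases hx : x ∈ I.1 <;> simp [hx]
    simp_rw [e1]
    rw [lintegral_const_mul _ (hf.indicator hI), lintegral_indicator hI,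
      Measure.restrict_restrict hI, inter_eq_self_of_subset_left I.2.2]
    unfold avgOp
    rw [lintegral_const_mul _ (measurable_const.indicator hI), lintegral_indicator hI,
      Measure.restrict_restrict hI, inter_eq_self_of_subset_left I.2.2, setLIntegral_const]
    simp only [div_eq_mul_inv]
    ring
  · intro I
    have hI := hm I.1 I.2.1
    exact ((measurable_const.indicator hI).const_mul _).aemeasurable
  · intro I
    have hI := hm I.1 I.2.1
    exact (((measurable_one.indicator hI).const_mul _).mul hf).aemeasurable

/-- If `T_α f = ∑_{I ∈ 𝓛} α_I · E_I^μ f` is bounded from `L^p(μ)` to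
`L^p(ν)` with norm `N`, then both testing conditions hold with constants comparable
to `N`, i.e. with constants `c(p) · N^p` and `c(p) · N^{p'}`. -/
theorem two_weight_necessity (p p' : ℝ) (hp : 1 < p) (hpp' : 1 / p + 1 / p' = 1) :
    ∃ c : ℝ≥0∞, 0 < c ∧ c < ∞ ∧
      ∀ (X : Type) [MeasurableSpace X] (L : LatticeFamily X) (μ ν : Measure X),
        (∀ I ∈ L.sets, 0 < μ I ∧ μ I < ∞) → (∀ I ∈ L.sets, ν I < ∞) →
        ∀ (α : Set X → ℝ≥0) (N : ℝ≥0∞),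
        (∀ f : X → ℝ≥0∞, Measurable f →
          ∫⁻ x, (∑' I : L.sets, (α I.1 : ℝ≥0∞) * avgOp μ I.1 f x) ^ p ∂ν
            ≤ N ^ p * ∫⁻ x, f x ^ p ∂μ) →
        ∀ J ∈ L.sets,
          (∫⁻ x in J, (∑' I : {I : Set X // I ∈ L.sets ∧ I ⊆ J},
              (α I.1 : ℝ≥0∞) * I.1.indicator 1 x) ^ p ∂ν ≤ c * N ^ p * μ J) ∧
          (∫⁻ x in J, (∑' I : {I : Set X // I ∈ L.sets ∧ I ⊆ J},
              (α I.1 : ℝ≥0∞) * (ν I.1 / μ I.1) * I.1.indicator 1 x) ^ p' ∂μ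
            ≤ c * N ^ p' * ν J) := by
  have hp'0 : p' ≠ 0 := by
    rintro rfl
    simp at hpp'
    linarith
  have hH : p.HolderConjugate p' := by
    rw [Real.holderConjugate_iff]
    exact ⟨hp, by simpa [one_div] using hpp'⟩
  refine ⟨1, one_pos, ENNReal.one_lt_top, ?_⟩
  intro X _ L μ ν hμ hν α N hT J hJ
  have hJm := lattice_sets_meas L hJ
  have hp0 := hH.pos
  have hq0 := hH.symm.pos
  constructor
  · have h1 := hT (J.indicator 1) (measurable_one.indicator hJm)
    have e : ∫⁻ x, (J.indicator (1 : X → ℝ≥0∞) x) ^ p ∂μ = μ J := by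
      rw [← lintegral_indicator_one hJm]
      refine lintegral_congr fun x => ?_
      by_cases hx : x ∈ J <;> simp [hx, hp0]
    rw [e] at h1
    rw [one_mul]
    refine le_trans (le_trans (lintegral_mono fun x => ?_) (setLIntegral_le_lintegral J _)) h1
    refine ENNReal.rpow_le_rpow ?_ hp0.le
    refine le_trans (le_of_eq ?_) (sub_tsum_le L.sets J
      (fun I => (α I : ℝ≥0∞) * avgOp μ I (J.indicator 1) x))
    refine tsum_congr fun I => ?_
    congr 1
    unfold avgOp
    have hI := lattice_sets_meas L I.2.1
    rw [lintegral_indicator_one hJm, Measure.restrict_apply hJm,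
      inter_eq_self_of_subset_right I.2.2,
      ENNReal.div_self (hμ _ I.2.1).1.ne' (hμ _ I.2.1).2.ne]
    rfl
  · rw [one_mul]
    have hc : Countable {I : Set X // I ∈ L.sets ∧ I ⊆ J} :=
      ((lattice_sets_countable L).mono (fun I hI => hI.1)).to_subtype
    set g : X → ℝ≥0∞ := fun x => ∑' I : {I : Set X // I ∈ L.sets ∧ I ⊆ J},
      (α I.1 : ℝ≥0∞) * (ν I.1 / μ I.1) * I.1.indicator 1 x with hgdef
    have hg : Measurable g := Measurable.tsum fun I =>
      (measurable_one.indicator (lattice_sets_meas L I.2.1)).const_mul _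
    refine lintegral_rpow_le_of_trunc (μ.restrict J) g hg hq0 _ fun n => ?_
    have hA : ∫⁻ x in J, (min (g x) n) ^ p' ∂μ ≠ ∞ := by
      refine ne_top_of_le_ne_top (b := (n : ℝ≥0∞) ^ p' * μ J) ?_ ?_
      · exact ENNReal.mul_ne_top (ENNReal.rpow_ne_top_of_nonneg hq0.le (ENNReal.natCast_ne_top n))
          (hμ J hJ).2.ne
      · rw [← setLIntegral_const]
        refine lintegral_mono fun x => ?_
        exact ENNReal.rpow_le_rpow (min_le_right _ _) hq0.le
    refine solve_ineq hH hA ?_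
    set f : X → ℝ≥0∞ := J.indicator fun x => (min (g x) n) ^ (p' - 1) with hfdef
    have hf : Measurable f := ((hg.min measurable_const).pow_const _).indicator hJm
    have hfp : ∫⁻ x, f x ^ p ∂μ = ∫⁻ x in J, (min (g x) n) ^ p' ∂μ := by
      rw [← lintegral_indicator hJm]
      refine lintegral_congr fun x => ?_
      by_cases hx : x ∈ J
      · simp only [hfdef, hx, indicator_of_mem]
        rw [← ENNReal.rpow_mul]
        congr 1
        exact hH.symm.sub_one_mul_conj
      · simp [hfdef, hx, hp0]
    have hq1 : 0 < p' - 1 := hH.symm.sub_one_pos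
    calc ∫⁻ x in J, (min (g x) n) ^ p' ∂μ
        ≤ ∫⁻ x in J, g x * f x ∂μ := by
          refine setLIntegral_mono' hJm fun x hx => ?_
          simp only [hfdef, hx, indicator_of_mem]
          calc (min (g x) n) ^ p' = (min (g x) n) ^ (1 + (p' - 1)) := by congr 1; ring
            _ = min (g x) n * (min (g x) n) ^ (p' - 1) := by
              rw [ENNReal.rpow_add_of_nonneg _ _ zero_le_one hq1.le, ENNReal.rpow_one]
            _ ≤ _ := by gcongr; exact min_le_left _ _
      _ = ∫⁻ x in J, (∑' I : {I : Set X // I ∈ L.sets ∧ I ⊆ J},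
            (α I.1 : ℝ≥0∞) * avgOp μ I.1 f x) ∂ν :=
          dual_id L.sets (lattice_sets_countable L) (fun I hI => lattice_sets_meas L hI)
            μ ν α J f hf
      _ ≤ (∫⁻ x in J, (∑' I : {I : Set X // I ∈ L.sets ∧ I ⊆ J},
            (α I.1 : ℝ≥0∞) * avgOp μ I.1 f x) ^ p ∂ν) ^ (1 / p)
            * (∫⁻ x in J, (1 : ℝ≥0∞) ^ p' ∂ν) ^ (1 / p') := by
          have := ENNReal.lintegral_mul_le_Lp_mul_Lq (ν.restrict J) hH
            (f := fun x => ∑' I : {I : Set X // I ∈ L.sets ∧ I ⊆ J},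
              (α I.1 : ℝ≥0∞) * avgOp μ I.1 f x) (g := fun _ => 1)
            (Measurable.tsum fun I => (measurable_const.indicator
              (lattice_sets_meas L I.2.1)).const_mul _).aemeasurable aemeasurable_const
          simpa using this
      _ ≤ _ := by
          rw [ENNReal.one_rpow, setLIntegral_const, one_mul]
          gcongr
          rw [← hfp]
          refine le_trans (le_trans (lintegral_mono fun x => ?_)
            (setLIntegral_le_lintegral J _)) (hT f hf)
          exact ENNReal.rpow_le_rpow (sub_tsum_le L.sets J
            (fun I => (α I : ℝ≥0∞) * avgOp μ I f x)) hp0.le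
end

section
/- Rubio de Francia Algorithm: let 1 ≤ q < p < ∞ and let μ be a positive measure on (X, 𝒯) with 0 < μ(I) < ∞ for all I ∈ 𝓛. For every nonnegative f ∈ L^p(μ) there exists a function F ∈ L^p(μ) such that (i) f ≤ F pointwise, (ii) ‖f‖_{L^p(μ)} ≤ ‖F‖_{L^p(μ)} ≤ 2^{1/q} ‖f‖_{L^p(μ)}, and (iii) for every I ∈ 𝓛, μ(I)^{-1} ∫_I F^q dμ ≤ K · inf_{x ∈ I} F^q(x), where K is a constant depending only on p and q. -/
open MeasureTheory ENNReal NNReal Set Filter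

namespace RdF

variable {X : Type*} [MeasurableSpace X]

lemma nested_aux (L : LatticeFamily X) (m : ℤ) (k : ℕ) :
    ∀ I ∈ L.gen m, ∀ J ∈ L.gen (m + k), J ⊆ I ∨ Disjoint I J := by
  induction k with
  | zero =>
    intro I hI J hJ
    simp only [Nat.cast_zero, add_zero] at hJ
    by_cases h : I = J
    · left; rw [h]
    · right; exact L.pairwiseDisjoint m hI hJ h
  | succ k ih =>
    intro I hI J hJ
    rcases J.eq_empty_or_nonempty with rfl | ⟨x, hx⟩
    · left; exact empty_subset _
    have hxu : x ∈ ⋃₀ L.gen (m + k) := by rw [L.cover]; trivial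
    obtain ⟨J', hJ', hxJ'⟩ := hxu
    obtain ⟨S, hS, hJS⟩ := L.subdiv _ J' hJ'
    have hx2 := hxJ'
    rw [hJS] at hx2
    obtain ⟨J2, hJ2, hxJ2⟩ := hx2
    have hJ3 : J ∈ L.gen (m + k + 1) := by
      have : m + ((k + 1 : ℕ) : ℤ) = m + k + 1 := by push_cast; ring
      rwa [this] at hJ
    have heq : J2 = J := by
      by_contra hne
      have hd : Disjoint J2 J := L.pairwiseDisjoint _ (hS hJ2) hJ3 hne
      exact (Set.disjoint_left.mp hd hxJ2 hx)
    have hsub : J ⊆ J' := by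
      rw [hJS, ← heq]; exact subset_sUnion_of_mem hJ2
    rcases ih I hI J' hJ' with h | h
    · left; exact hsub.trans h
    · right; exact h.mono_right hsub

lemma nested (L : LatticeFamily X) {m n : ℤ} (hmn : m ≤ n) {I J : Set X}
    (hI : I ∈ L.gen m) (hJ : J ∈ L.gen n) : J ⊆ I ∨ Disjoint I J := by
  obtain ⟨k, rfl⟩ := Int.le.dest hmn
  exact nested_aux L m k I hI J hJ

lemma sets_countable (L : LatticeFamily X) : L.sets.Countable :=
  countable_iUnion L.countable

lemma sets_meas (L : LatticeFamily X) {I : Set X} (hI : I ∈ L.sets) : MeasurableSet I := by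
  obtain ⟨n, hn⟩ := mem_iUnion.mp hI
  exact L.meas n I hn

lemma maxOp_eq (L : LatticeFamily X) (μ : Measure X) (f : X → ℝ≥0∞) :
    maxOp L μ f = fun x => ⨆ I ∈ L.sets, avgOp μ I f x := by
  funext x
  unfold maxOp avgOp
  apply le_antisymm
  · refine iSup₂_le fun I hI => ?_
    refine le_trans ?_ (le_iSup₂ (f := fun I (_ : I ∈ L.sets) =>
      I.indicator (fun _ => (∫⁻ y in I, f y ∂μ) / μ I) x) I hI.1)
    simp [hI.2]
  · refine iSup₂_le fun I hI => ?_
    by_cases hx : x ∈ I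
    · simp only [hx, indicator_of_mem]
      exact le_iSup₂ (f := fun I (_ : I ∈ L.sets ∧ x ∈ I) => (∫⁻ y in I, f y ∂μ) / μ I) I ⟨hI, hx⟩
    · simp [hx]

lemma maxOp_meas (L : LatticeFamily X) (μ : Measure X) (f : X → ℝ≥0∞) :
    Measurable (maxOp L μ f) := by
  rw [maxOp_eq]
  refine Measurable.biSup _ (sets_countable L) fun I hI => ?_
  exact measurable_const.indicator (sets_meas L hI)

lemma le_maxOp (L : LatticeFamily X) (μ : Measure X) (f : X → ℝ≥0∞) {I : Set X}
    (hI : I ∈ L.sets) {x : X} (hx : x ∈ I) : (∫⁻ y in I, f y ∂μ) / μ I ≤ maxOp L μ f x :=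
  le_iSup₂ (f := fun I (_ : I ∈ L.sets ∧ x ∈ I) => (∫⁻ y in I, f y ∂μ) / μ I) I ⟨hI, hx⟩

lemma lt_maxOp (L : LatticeFamily X) (μ : Measure X) (f : X → ℝ≥0∞) {x : X} {t : ℝ≥0∞}
    (h : t < maxOp L μ f x) : ∃ I ∈ L.sets, x ∈ I ∧ t < (∫⁻ y in I, f y ∂μ) / μ I := by
  unfold maxOp at h
  simp only [lt_iSup_iff] at h
  obtain ⟨I, hI, h⟩ := h
  exact ⟨I, hI.1, hI.2, h⟩

/-- bad sets of generation at least `m` -/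
def bad (L : LatticeFamily X) (μ : Measure X) (f : X → ℝ≥0∞) (t : ℝ≥0∞) (m : ℤ) : Set (Set X) :=
  {I | (∃ k, m ≤ k ∧ I ∈ L.gen k) ∧ t < (∫⁻ y in I, f y ∂μ) / μ I}

lemma weak_m (L : LatticeFamily X) (μ : Measure X)
    (hμ : ∀ I ∈ L.sets, 0 < μ I ∧ μ I < ∞) (f : X → ℝ≥0∞) (t : ℝ≥0∞) (m : ℤ) :
    t * μ (⋃₀ bad L μ f t m) ≤ ∫⁻ x, f x ∂μ := by
  set B := bad L μ f t m with hB
  have hBs : ∀ I ∈ B, I ∈ L.sets := by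
    rintro I ⟨⟨k, _, hk⟩, _⟩
    exact mem_iUnion.mpr ⟨k, hk⟩
  set T : Set (Set X) := {I | I ∈ B ∧ ∀ J ∈ B, I ⊆ J → I = J} with hT
  have hTB : T ⊆ B := fun I hI => hI.1
  have hTc : T.Countable := (sets_countable L).mono fun I hI => hBs I (hTB hI)
  have hTd : T.PairwiseDisjoint id := by
    intro I hI J hJ hne
    obtain ⟨⟨k, hk, hIk⟩, hIb⟩ := hI.1
    obtain ⟨⟨l, hl, hJl⟩, hJb⟩ := hJ.1
    rcases le_total k l with h | h
    · rcases nested L h hIk hJl with h1 | h1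
      · exact absurd (hJ.2 I hI.1 h1).symm hne
      · exact h1
    · rcases nested L h hJl hIk with h1 | h1
      · exact absurd (hI.2 J hJ.1 h1) hne
      · exact h1.symm
  have hU : ⋃₀ B ⊆ ⋃ I ∈ T, I := by
    rintro x ⟨I, hI, hxI⟩
    have hex : ∃ k : ℕ, ∃ I ∈ B, x ∈ I ∧ I ∈ L.gen (m + k) := by
      obtain ⟨⟨k, hk, hIk⟩, hIb⟩ := hI
      obtain ⟨j, rfl⟩ := Int.le.dest hk
      exact ⟨j, I, ⟨⟨_, hk, hIk⟩, hIb⟩, hxI, hIk⟩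
    classical
    obtain ⟨I0, hI0, hx0, hg0⟩ := Nat.find_spec hex
    refine mem_biUnion (x := I0) ⟨hI0, ?_⟩ hx0
    intro J hJ hIJ
    obtain ⟨⟨k, hk, hJk⟩, hJb⟩ := id hJ
    obtain ⟨j, rfl⟩ := Int.le.dest hk
    have hmin : Nat.find hex ≤ j := Nat.find_min' hex ⟨J, hJ, hIJ hx0, hJk⟩
    rcases nested L (by omega : m + (Nat.find hex : ℤ) ≤ m + j) hg0 hJk with h1 | h1
    · exact subset_antisymm hIJ h1
    · exact absurd (hIJ hx0) (Set.disjoint_left.mp h1 hx0)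
  have : Countable T := hTc.to_subtype
  calc t * μ (⋃₀ B) ≤ t * μ (⋃ I ∈ T, I) := by gcongr
    _ ≤ t * ∑' I : T, μ I := by gcongr; exact measure_biUnion_le μ hTc _
    _ = ∑' I : T, t * μ I := ENNReal.tsum_mul_left.symm
    _ ≤ ∑' I : T, ∫⁻ x in (I : Set X), f x ∂μ := by
        refine ENNReal.tsum_le_tsum fun I => ?_
        have h1 := (hTB I.2).2.le
        have h2 := hμ I (hBs I (hTB I.2))
        rwa [ENNReal.le_div_iff_mul_le (Or.inl h2.1.ne') (Or.inl h2.2.ne)] at h1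
    _ = ∫⁻ x in ⋃ I ∈ T, I, f x ∂μ :=
        (lintegral_biUnion hTc (fun I hI => sets_meas L (hBs I (hTB hI))) hTd f).symm
    _ ≤ ∫⁻ x, f x ∂μ := setLIntegral_le_lintegral _ _

lemma weak (L : LatticeFamily X) (μ : Measure X)
    (hμ : ∀ I ∈ L.sets, 0 < μ I ∧ μ I < ∞) (f : X → ℝ≥0∞) (t : ℝ≥0∞) :
    t * μ {x | t < maxOp L μ f x} ≤ ∫⁻ x, f x ∂μ := by
  have hsub : {x | t < maxOp L μ f x} ⊆ ⋃ n : ℕ, ⋃₀ bad L μ f t (-(n : ℤ)) := by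
    intro x hx
    obtain ⟨I, hI, hxI, hlt⟩ := lt_maxOp L μ f hx
    obtain ⟨k, hk⟩ := mem_iUnion.mp hI
    exact mem_iUnion.mpr ⟨k.natAbs, I, ⟨⟨k, by omega, hk⟩, hlt⟩, hxI⟩
  have hmono : Monotone fun n : ℕ => ⋃₀ bad L μ f t (-(n : ℤ)) := by
    intro a b hab
    apply sUnion_subset_sUnion
    rintro I ⟨⟨k, hk, hg⟩, hl⟩
    exact ⟨⟨k, by omega, hg⟩, hl⟩
  calc _ ≤ t * μ (⋃ n : ℕ, ⋃₀ bad L μ f t (-(n : ℤ))) := by gcongr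
    _ = ⨆ n : ℕ, t * μ (⋃₀ bad L μ f t (-(n : ℤ))) := by
        rw [hmono.measure_iUnion, ENNReal.mul_iSup]
    _ ≤ _ := iSup_le fun n => weak_m L μ hμ f t _

lemma weak' (L : LatticeFamily X) (μ : Measure X)
    (hμ : ∀ I ∈ L.sets, 0 < μ I ∧ μ I < ∞) (g : X → ℝ≥0∞) (t : ℝ≥0∞) :
    t * μ {x | t < maxOp L μ g x} ≤ 2 * ∫⁻ x, {x | t < 2 * g x}.indicator g x ∂μ := by
  set g1 := {x | t < 2 * g x}.indicator g with hg1
  have hle : ∀ x, g x ≤ g1 x + t / 2 := by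
    intro x
    by_cases hx : t < 2 * g x
    · simp [hg1, indicator, hx]
    · have : g x ≤ t / 2 := by
        rw [ENNReal.le_div_iff_mul_le (by simp) (by simp), mul_comm]; exact not_lt.mp hx
      exact this.trans le_add_self
  have hM : ∀ x, maxOp L μ g x ≤ maxOp L μ g1 x + t / 2 := by
    intro x
    refine iSup₂_le fun I hI => ?_
    have hI2 := hμ I hI.1
    calc (∫⁻ y in I, g y ∂μ) / μ I ≤ (∫⁻ y in I, (g1 y + t / 2) ∂μ) / μ I := by
          gcongr with y; exact hle y
      _ = (∫⁻ y in I, g1 y ∂μ) / μ I + t / 2 := by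
          rw [lintegral_add_right _ measurable_const, setLIntegral_const, ENNReal.add_div,
            ENNReal.mul_div_cancel_right hI2.1.ne' hI2.2.ne]
      _ ≤ _ := by gcongr; exact le_maxOp L μ g1 hI.1 hI.2
  have hsub : {x | t < maxOp L μ g x} ⊆ {x | t / 2 < maxOp L μ g1 x} := by
    intro x hx
    by_contra hc
    have h1 : maxOp L μ g1 x ≤ t / 2 := not_lt.mp hc
    have h2 : maxOp L μ g x ≤ t := by
      calc _ ≤ _ := hM x
        _ ≤ t / 2 + t / 2 := by gcongr
        _ = t := ENNReal.add_halves t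
    exact absurd hx (not_lt.mpr h2)
  calc t * μ {x | t < maxOp L μ g x} ≤ t * μ {x | t / 2 < maxOp L μ g1 x} := by gcongr
    _ = 2 * (t / 2 * μ {x | t / 2 < maxOp L μ g1 x}) := by
        rw [← mul_assoc, ENNReal.mul_div_cancel (by simp) (by simp)]
    _ ≤ _ := by gcongr; exact weak L μ hμ g1 (t / 2)

/-- layer cake kernel -/
noncomputable def Phi (a : ℝ) (y : ℝ≥0∞) : ℝ≥0∞ :=
  ∫⁻ t in Ioi (0 : ℝ), (Iio y).indicator 1 (ENNReal.ofReal t) * ENNReal.ofReal (t ^ (a - 1))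

lemma Phi_mono (a : ℝ) : Monotone (Phi a) := by
  intro y z h
  unfold Phi
  gcongr

lemma Phi_coe (a : ℝ) (ha : 0 < a) (y : ℝ) (hy : 0 ≤ y) :
    ENNReal.ofReal a * Phi a (ENNReal.ofReal y) = ENNReal.ofReal y ^ a := by
  have h := lintegral_rpow_eq_lintegral_meas_lt_mul (μ := Measure.dirac ())
    (f := fun _ => y) (Eventually.of_forall fun _ => hy) aemeasurable_const ha
  rw [lintegral_dirac] at h
  rw [ENNReal.ofReal_rpow_of_nonneg hy ha.le, h, Phi]
  congr 1
  refine setLIntegral_congr_fun measurableSet_Ioi fun t ht => ?_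
  have ht : 0 < t := ht
  beta_reduce
  congr 1
  by_cases hty : t < y
  · simp [hty, ENNReal.ofReal_lt_ofReal_iff (ht.trans hty)]
  · simp [hty, ENNReal.ofReal_le_ofReal (not_lt.mp hty)]

lemma Phi_eq (a : ℝ) (ha : 0 < a) (y : ℝ≥0∞) : ENNReal.ofReal a * Phi a y = y ^ a := by
  by_cases hy : y = ∞
  · subst hy
    rw [ENNReal.top_rpow_of_pos ha]
    refine ENNReal.eq_top_of_forall_nnreal_le ?_
    intro r
    have h1 : (r : ℝ≥0∞) = ENNReal.ofReal ((r : ℝ) ^ (1 / a)) ^ a := by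
      rw [ENNReal.ofReal_rpow_of_nonneg (by positivity) ha.le, ← Real.rpow_mul r.coe_nonneg,
        one_div_mul_cancel ha.ne', Real.rpow_one, ENNReal.ofReal_coe_nnreal]
    rw [h1, ← Phi_coe a ha _ (by positivity)]
    gcongr
    exact Phi_mono a le_top
  · rw [← ENNReal.ofReal_toReal hy]
    exact Phi_coe a ha _ ENNReal.toReal_nonneg

lemma sigmaFinite_of (L : LatticeFamily X) (μ : Measure X)
    (hμ : ∀ I ∈ L.sets, 0 < μ I ∧ μ I < ∞) : SigmaFinite μ := by
  refine Measure.sigmaFinite_of_countable (S := L.gen 0) (L.countable 0) ?_ ?_ 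
  · intro I hI
    exact (hμ I (mem_iUnion.mpr ⟨0, hI⟩)).2
  · exact L.cover 0

lemma meas_kernel {g : X → ℝ≥0∞} (hg : Measurable g) :
    Measurable fun z : X × ℝ => (Iio (g z.1)).indicator (1 : ℝ≥0∞ → ℝ≥0∞) (ENNReal.ofReal z.2) := by
  have hs : MeasurableSet {z : X × ℝ | ENNReal.ofReal z.2 < g z.1} :=
    measurableSet_lt (by fun_prop) (by fun_prop)
  exact (measurable_one.indicator hs : Measurable
    ({z : X × ℝ | ENNReal.ofReal z.2 < g z.1}.indicator (1 : X × ℝ → ℝ≥0∞)))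

/-- the constant -/
noncomputable def C0 (r : ℝ) : ℝ≥0∞ :=
  ENNReal.ofReal r * (2 * (2 ^ (r - 1) / ENNReal.ofReal (r - 1)))

lemma strong (L : LatticeFamily X) (μ : Measure X)
    (hμ : ∀ I ∈ L.sets, 0 < μ I ∧ μ I < ∞) (g : X → ℝ≥0∞) (hg : Measurable g)
    (r : ℝ) (hr : 1 < r) :
    ∫⁻ x, maxOp L μ g x ^ r ∂μ ≤ C0 r * ∫⁻ x, g x ^ r ∂μ := by
  have : SigmaFinite μ := sigmaFinite_of L μ hμ
  have hM := maxOp_meas L μ g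
  have hpw : Measurable fun t : ℝ => ENNReal.ofReal (t ^ (r - 1)) := by fun_prop
  have hpw2 : Measurable fun t : ℝ => ENNReal.ofReal (t ^ (r - 1 - 1)) := by fun_prop
  have hk := meas_kernel hM
  have hk2 := meas_kernel (hg.const_mul 2)
  have e1 : ∫⁻ x, maxOp L μ g x ^ r ∂μ = ENNReal.ofReal r *
      ∫⁻ t in Ioi (0 : ℝ), μ {x | ENNReal.ofReal t < maxOp L μ g x} * ENNReal.ofReal (t ^ (r - 1)) := by
    simp_rw [← Phi_eq r (by linarith)]
    rw [lintegral_const_mul' _ _ (by simp)]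
    unfold Phi
    rw [lintegral_lintegral_swap
      ((hk.mul (hpw.comp measurable_snd)).aemeasurable)]
    congr 1
    refine lintegral_congr fun t => ?_
    rw [lintegral_mul_const' _ _ (by simp)]
    congr 1
    rw [← lintegral_indicator_one (measurableSet_lt measurable_const hM)]
    rfl
  rw [e1]
  unfold C0
  rw [mul_assoc]
  gcongr
  have e2 : ∀ t ∈ Ioi (0 : ℝ), μ {x | ENNReal.ofReal t < maxOp L μ g x} * ENNReal.ofReal (t ^ (r - 1))
      ≤ 2 * ∫⁻ x, (Iio (2 * g x)).indicator 1 (ENNReal.ofReal t) * ENNReal.ofReal (t ^ (r - 1 - 1)) * g x ∂μ := by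
    intro t ht
    have ht : 0 < t := ht
    have h1 := weak' L μ hμ g (ENNReal.ofReal t)
    have h2 : ENNReal.ofReal (t ^ (r - 1)) = ENNReal.ofReal t * ENNReal.ofReal (t ^ (r - 1 - 1)) := by
      rw [← ENNReal.ofReal_mul ht.le]
      congr 1
      rw [Real.rpow_sub_one ht.ne' (r - 1)]
      field_simp
    rw [h2]
    calc _ = (ENNReal.ofReal t * μ {x | ENNReal.ofReal t < maxOp L μ g x}) * ENNReal.ofReal (t ^ (r - 1 - 1)) := by ring
      _ ≤ (2 * ∫⁻ x, {x | ENNReal.ofReal t < 2 * g x}.indicator g x ∂μ) * ENNReal.ofReal (t ^ (r - 1 - 1)) := by gcongr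
      _ = _ := by
        rw [mul_assoc, ← lintegral_mul_const' _ _ (by simp)]
        congr 1
        refine lintegral_congr fun x => ?_
        by_cases hx : ENNReal.ofReal t < 2 * g x
        · simp [indicator, hx, mul_comm]
        · simp [indicator, hx]
  calc _ ≤ ∫⁻ t in Ioi (0 : ℝ), 2 * ∫⁻ x, (Iio (2 * g x)).indicator 1 (ENNReal.ofReal t) * ENNReal.ofReal (t ^ (r - 1 - 1)) * g x ∂μ :=
        setLIntegral_mono' measurableSet_Ioi e2
    _ = 2 * ∫⁻ x, Phi (r - 1) (2 * g x) * g x ∂μ := by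
        rw [lintegral_const_mul' _ _ (by simp)]
        unfold Phi
        congr 1
        rw [← lintegral_lintegral_swap
          (((hk2.mul (hpw2.comp measurable_snd)).mul (hg.comp measurable_fst)).aemeasurable)]
        refine lintegral_congr fun x => ?_
        rw [lintegral_mul_const]
        exact (hk2.comp (measurable_prodMk_left (x := x))).mul hpw2
    _ = 2 * ∫⁻ x, (2 ^ (r - 1) / ENNReal.ofReal (r - 1)) * g x ^ r ∂μ := by
        congr 1
        refine lintegral_congr fun x => ?_
        have hr0 : ENNReal.ofReal (r - 1) ≠ 0 := by simp; linarith
        have h := Phi_eq (r - 1) (by linarith) (2 * g x)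
        have h3 : Phi (r - 1) (2 * g x) = (2 * g x) ^ (r - 1) / ENNReal.ofReal (r - 1) := by
          rw [ENNReal.eq_div_iff hr0 (by simp), h]
        have h4 : g x ^ r = g x ^ (r - 1) * g x := by
          conv_lhs => rw [show r = (r - 1) + 1 by ring]
          rw [ENNReal.rpow_add_of_nonneg _ _ (by linarith) (by norm_num), ENNReal.rpow_one]
        rw [h3, ENNReal.mul_rpow_of_nonneg _ _ (by linarith), h4]
        simp only [div_eq_mul_inv]
        ring
    _ = _ := by
        rw [lintegral_const_mul _ (hg.pow_const r), mul_assoc]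

lemma minkowski_sum {μ : Measure X} (r : ℝ) (hr : 1 ≤ r) (u : ℕ → X → ℝ≥0∞)
    (hu : ∀ k, Measurable (u k)) (n : ℕ) :
    (∫⁻ x, (∑ k ∈ Finset.range n, u k x) ^ r ∂μ) ^ (1 / r)
      ≤ ∑ k ∈ Finset.range n, (∫⁻ x, u k x ^ r ∂μ) ^ (1 / r) := by
  induction n with
  | zero =>
    have h0 : 0 < r := by linarith
    simp [ENNReal.zero_rpow_of_pos h0, h0]
  | succ n ih =>
    simp only [Finset.sum_range_succ]
    refine le_trans (ENNReal.lintegral_Lp_add_le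
      (f := fun x => ∑ k ∈ Finset.range n, u k x) (g := u n)
      (Finset.measurable_fun_sum _ fun k _ => hu k).aemeasurable (hu n).aemeasurable hr) ?_
    gcongr

lemma minkowski_tsum {μ : Measure X} (r : ℝ) (hr : 1 ≤ r) (u : ℕ → X → ℝ≥0∞)
    (hu : ∀ k, Measurable (u k)) :
    (∫⁻ x, (∑' k, u k x) ^ r ∂μ) ^ (1 / r) ≤ ∑' k, (∫⁻ x, u k x ^ r ∂μ) ^ (1 / r) := by
  have h0 : 0 < r := by linarith
  have hsup : ∀ x, (∑' k, u k x) ^ r = ⨆ n, (∑ k ∈ Finset.range n, u k x) ^ r := by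
    intro x
    rw [ENNReal.tsum_eq_iSup_nat]
    exact (ENNReal.orderIsoRpow r h0).map_iSup _
  simp_rw [hsup]
  rw [lintegral_iSup]
  · have := (ENNReal.orderIsoRpow (1 / r) (by positivity)).map_iSup
      (fun n => ∫⁻ x, (∑ k ∈ Finset.range n, u k x) ^ r ∂μ)
    simp only [ENNReal.orderIsoRpow_apply] at this
    rw [this]
    exact iSup_le fun n => (minkowski_sum r hr u hu n).trans (ENNReal.sum_le_tsum _)
  · intro n
    exact (Finset.measurable_fun_sum _ fun k _ => hu k).pow_const r
  · intro a b hab x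
    beta_reduce
    gcongr

end RdF


/-- **Rubio de Francia algorithm.** For `1 ≤ q < p < ∞` there is a constant
`K = K(p,q)` such that for every nonnegative `f ∈ L^p(μ)` there exists `F ∈ L^p(μ)` with
`f ≤ F`, `‖f‖_p ≤ ‖F‖_p ≤ 2^{1/q} ‖f‖_p`, and
`μ(I)⁻¹ ∫_I F^q dμ ≤ K · inf_{x ∈ I} F(x)^q` for every `I ∈ 𝓛`. -/
theorem rubio_de_francia (p q : ℝ) (hq : 1 ≤ q) (hqp : q < p) :
    ∃ K : ℝ≥0∞, 0 < K ∧ K < ∞ ∧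
      ∀ (X : Type) [MeasurableSpace X] (L : LatticeFamily X) (μ : Measure X),
        (∀ I ∈ L.sets, 0 < μ I ∧ μ I < ∞) →
        ∀ f : X → ℝ≥0∞, Measurable f → ∫⁻ x, f x ^ p ∂μ < ∞ →
          ∃ F : X → ℝ≥0∞, Measurable F ∧
            (∀ x, f x ≤ F x) ∧
            (∫⁻ x, f x ^ p ∂μ) ^ (1 / p) ≤ (∫⁻ x, F x ^ p ∂μ) ^ (1 / p) ∧
            (∫⁻ x, F x ^ p ∂μ) ^ (1 / p)
              ≤ (2 : ℝ≥0∞) ^ (1 / q) * (∫⁻ x, f x ^ p ∂μ) ^ (1 / p) ∧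
            ∀ I ∈ L.sets, (∫⁻ x in I, F x ^ q ∂μ) / μ I ≤ K * ⨅ x ∈ I, F x ^ q := by
  have hq0 : 0 < q := by linarith
  have hr : 1 < p / q := by rw [lt_div_iff₀ hq0]; linarith
  have hr0 : 0 < p / q := by linarith
  set r := p / q with hrdef
  have hC0 : RdF.C0 r ≠ 0 := by
    have h1 : ENNReal.ofReal r ≠ 0 := by simp; linarith
    have h2 : (2 : ℝ≥0∞) ^ (r - 1) ≠ 0 := by simp
    unfold RdF.C0
    exact mul_ne_zero h1 (mul_ne_zero (by simp) (ENNReal.div_ne_zero.mpr ⟨h2, by simp⟩))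
  have hC1 : RdF.C0 r ≠ ∞ := by
    have h1 : ENNReal.ofReal (r - 1) ≠ 0 := by simp; linarith
    have h2 : (2 : ℝ≥0∞) ^ (r - 1) ≠ ∞ := ENNReal.rpow_ne_top_of_nonneg (by linarith) (by simp)
    unfold RdF.C0
    exact ENNReal.mul_ne_top (by simp) (ENNReal.mul_ne_top (by simp) (ENNReal.div_ne_top h2 h1))
  set C := RdF.C0 r ^ (1 / r) with hCdef
  have hCz : C ≠ 0 := (ENNReal.rpow_pos (pos_iff_ne_zero.mpr hC0) hC1).ne'
  have hCt : C ≠ ∞ := ENNReal.rpow_ne_top_of_nonneg (by positivity) hC1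
  have hKz : 2 * C ≠ 0 := mul_ne_zero (by simp) hCz
  have hKt : 2 * C ≠ ∞ := ENNReal.mul_ne_top (by simp) hCt
  refine ⟨2 * C, pos_iff_ne_zero.mpr hKz, lt_top_iff_ne_top.mpr hKt, ?_⟩
  intro X _ L μ hμ f hf hfp
  set M := maxOp L μ with hMdef
  set h : X → ℝ≥0∞ := fun x => f x ^ q with hh
  set c : ℝ≥0∞ := (2 * C)⁻¹ with hc
  have hhm : Measurable h := hf.pow_const q
  have hit : ∀ k, Measurable (M^[k] h) := by
    intro k
    cases k with
    | zero => exact hhm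
    | succ k => rw [Function.iterate_succ_apply']; exact RdF.maxOp_meas L μ _
  set u : ℕ → X → ℝ≥0∞ := fun k x => c ^ k * (M^[k] h) x with hu
  have hum : ∀ k, Measurable (u k) := fun k => (hit k).const_mul _
  set G : X → ℝ≥0∞ := fun x => ∑' k, u k x with hG
  have hGm : Measurable G := Measurable.ennreal_tsum hum
  have hhG : ∀ x, h x ≤ G x := by
    intro x
    have := ENNReal.le_tsum (f := fun k => u k x) 0
    simpa [hu] using this
  have hnorm : ∀ k, (∫⁻ x, (M^[k] h) x ^ r ∂μ) ^ (1 / r) ≤ C ^ k * (∫⁻ x, h x ^ r ∂μ) ^ (1 / r) := by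
    intro k
    induction k with
    | zero => simp
    | succ k ih =>
      rw [Function.iterate_succ_apply']
      calc _ ≤ (RdF.C0 r * ∫⁻ x, (M^[k] h) x ^ r ∂μ) ^ (1 / r) := by
            gcongr; exact RdF.strong L μ hμ _ (hit k) r hr
        _ = C * (∫⁻ x, (M^[k] h) x ^ r ∂μ) ^ (1 / r) := by
            rw [ENNReal.mul_rpow_of_nonneg _ _ (by positivity)]
        _ ≤ C * (C ^ k * (∫⁻ x, h x ^ r ∂μ) ^ (1 / r)) := by gcongr
        _ = _ := by ring
  have hcC : c * C = 2⁻¹ := by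
    rw [hc, ENNReal.mul_inv (by simp) (by simp), mul_assoc, ENNReal.inv_mul_cancel hCz hCt, mul_one]
  have hGnorm : (∫⁻ x, G x ^ r ∂μ) ^ (1 / r) ≤ 2 * (∫⁻ x, h x ^ r ∂μ) ^ (1 / r) := by
    refine (RdF.minkowski_tsum r hr.le u hum).trans ?_
    calc _ ≤ ∑' k : ℕ, (2⁻¹ : ℝ≥0∞) ^ k * (∫⁻ x, h x ^ r ∂μ) ^ (1 / r) := by
          refine ENNReal.tsum_le_tsum fun k => ?_
          simp only [hu]
          simp_rw [ENNReal.mul_rpow_of_nonneg _ _ hr0.le]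
          rw [lintegral_const_mul _ ((hit k).pow_const r),
            ENNReal.mul_rpow_of_nonneg _ _ (by positivity), ← ENNReal.rpow_mul,
            mul_one_div_cancel hr0.ne', ENNReal.rpow_one]
          calc _ ≤ c ^ k * (C ^ k * (∫⁻ x, h x ^ r ∂μ) ^ (1 / r)) := by gcongr; exact hnorm k
            _ = _ := by rw [← mul_assoc, ← mul_pow, hcC]
      _ = _ := by
          rw [ENNReal.tsum_mul_right, ENNReal.tsum_geometric, ENNReal.one_sub_inv_two, inv_inv]
  have hFq : ∀ x, (G x ^ (1 / q)) ^ q = G x := by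
    intro x
    rw [← ENNReal.rpow_mul, one_div_mul_cancel hq0.ne', ENNReal.rpow_one]
  have hfF : ∀ x, f x ≤ G x ^ (1 / q) := by
    intro x
    calc f x = (f x ^ q) ^ (1 / q) := by
          rw [← ENNReal.rpow_mul, mul_one_div_cancel hq0.ne', ENNReal.rpow_one]
      _ ≤ _ := by gcongr; exact hhG x
  have hp0 : 0 < p := by linarith
  have hqr : q * r = p := by rw [hrdef]; field_simp
  refine ⟨fun x => G x ^ (1 / q), hGm.pow_const _, hfF, ?_, ?_, ?_⟩
  · gcongr with x
    exact hfF x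
  · have e1 : ∀ x, (G x ^ (1 / q)) ^ p = G x ^ r := by
      intro x
      rw [← ENNReal.rpow_mul, hrdef]; congr 1; ring
    have e2 : ∀ x, f x ^ p = h x ^ r := by
      intro x
      rw [hh]; beta_reduce
      rw [← ENNReal.rpow_mul, hqr]
    have e3 : 1 / p = (1 / r) * (1 / q) := by rw [hrdef]; field_simp
    simp_rw [e1, e2]
    rw [e3, ENNReal.rpow_mul, ENNReal.rpow_mul, ← ENNReal.mul_rpow_of_nonneg _ _ (by positivity)]
    gcongr
  · intro I hI
    simp_rw [hFq]
    have hMG : ∀ x ∈ I, (∫⁻ y in I, G y ∂μ) / μ I ≤ 2 * C * G x := by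
      intro x hx
      calc (∫⁻ y in I, G y ∂μ) / μ I = ∑' k, c ^ k * ((∫⁻ y in I, (M^[k] h) y ∂μ) / μ I) := by
            simp only [hG]
            rw [lintegral_tsum fun k => (hum k).aemeasurable, div_eq_mul_inv,
              ← ENNReal.tsum_mul_right]
            refine tsum_congr fun k => ?_
            simp only [hu]
            rw [lintegral_const_mul _ (hit k), div_eq_mul_inv, mul_assoc]
        _ ≤ ∑' k, 2 * C * u (k + 1) x := by
            refine ENNReal.tsum_le_tsum fun k => ?_
            have : 2 * C * u (k + 1) x = c ^ k * (M^[k + 1] h) x := by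
              simp only [hu, pow_succ]
              calc _ = (2 * C * c) * (c ^ k * (M^[k + 1] h) x) := by ring
                _ = _ := by rw [hc, ENNReal.mul_inv_cancel hKz hKt, one_mul]
            rw [this, Function.iterate_succ_apply']
            gcongr
            exact RdF.le_maxOp L μ _ hI hx
        _ = 2 * C * ∑' k, u (k + 1) x := ENNReal.tsum_mul_left
        _ ≤ 2 * C * G x := by
            gcongr
            exact ENNReal.tsum_comp_le_tsum_of_injective (add_left_injective 1) (fun k => u k x)
    rw [mul_comm, ← ENNReal.div_le_iff hKz hKt]
    refine le_iInf₂ fun x hx => ?_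
    rw [ENNReal.div_le_iff hKz hKt, mul_comm]
    exact hMG x hx
end
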